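/- The topology induced by SCW̄_p on 𝒫_p(𝒳_1 × 𝒫_p(𝒳_2)) is equal to the topology induced by AW̄_p on that space. -/

import Mathlib

open MeasureTheory ProbabilityTheory ENNReal Filter Topology

noncomputable section

namespace AWPaper

/-! ### Generic constructions -/

variable {α β : Type*}

/-- The set of couplings of two measures. -/
def Cpl [MeasurableSpace α] [MeasurableSpace β] (μ : Measure α) (ν : Measure β) :
    Set (Measure (α × β)) :=
  {π | π.map Prod.fst = μ ∧ π.map Prod.snd = ν}

/-- The `p`-Wasserstein distance (with values in `ℝ≥0∞`) associated to an
`ℝ≥0∞`-valued distance function `d`. -/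
def Wp [MeasurableSpace α] (p : ℝ) (d : α → α → ℝ≥0∞) (μ ν : Measure α) : ℝ≥0∞ :=
  ⨅ π ∈ Cpl μ ν, (∫⁻ z, d z.1 z.2 ^ p ∂π) ^ (1 / p)

/-- The topology generated by the open balls of an `ℝ≥0∞`-valued distance
function.  For a genuine metric this is the metric topology. -/
def ballTop (d : α → α → ℝ≥0∞) : TopologicalSpace α :=
  TopologicalSpace.generateFrom {s | ∃ x ε, 0 < ε ∧ s = {y | d x y < ε}}

/-- The product distance of two `ℝ≥0∞`-valued distances, `ℓ^p`-style. -/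
def prodDist (p : ℝ) (d₁ : α → α → ℝ≥0∞) (d₂ : β → β → ℝ≥0∞) :
    α × β → α × β → ℝ≥0∞ :=
  fun u v => (d₁ u.1 v.1 ^ p + d₂ u.2 v.2 ^ p) ^ (1 / p)

/-- Membership in the `p`-Wasserstein space: a probability measure with finite
`p`-th moment (w.r.t. the distance function `d`). -/
def MemPp [MeasurableSpace α] (p : ℝ) (d : α → α → ℝ≥0∞) (μ : Measure α) : Prop :=
  IsProbabilityMeasure μ ∧ ∃ x₀, ∫⁻ x, d x₀ x ^ p ∂μ ≠ ∞

/-- The weak topology on measures induced by integration of bounded continuous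
functions, for a given topology `τ` on the base space. -/
def weakTop [MeasurableSpace α] (τ : TopologicalSpace α) : TopologicalSpace (Measure α) :=
  TopologicalSpace.induced
    (fun μ => fun f : @BoundedContinuousFunction α ℝ τ _ => ∫ x, f x ∂μ)
    Pi.topologicalSpace

/-- The product topology built from two explicitly given topologies. -/
def prodTop (τ₁ : TopologicalSpace α) (τ₂ : TopologicalSpace β) : TopologicalSpace (α × β) :=
  TopologicalSpace.induced Prod.fst τ₁ ⊓ TopologicalSpace.induced Prod.snd τ₂

/-- An everywhere-defined version of the disintegration kernel: it agrees with
`Measure.condKernel` on finite measures. -/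
def condK [MeasurableSpace α] [MeasurableSpace β] [StandardBorelSpace β] [Nonempty β]
    (ρ : Measure (α × β)) : Kernel α β :=
  letI := Classical.dec (IsFiniteMeasure ρ)
  if h : IsFiniteMeasure ρ then @Measure.condKernel α β _ _ _ _ ρ h else 0

/-- The disintegration map `𝒫(A × B) → 𝒫(A × 𝒫(B))`. -/
def disint [MeasurableSpace α] [MeasurableSpace β] [StandardBorelSpace β] [Nonempty β]
    (μ : Measure (α × β)) : Measure (α × Measure β) :=
  μ.map (fun z => (z.1, condK μ z.1))

/-- The intensity ("und") map `𝒫(A × 𝒫(B)) → 𝒫(A × B)`. -/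
def und [MeasurableSpace α] [MeasurableSpace β] (μ : Measure (α × Measure β)) :
    Measure (α × β) :=
  μ.bind (fun z => (Measure.dirac z.1).prod z.2)

/-! ### Path spaces -/

variable {X : Type*} [MeasurableSpace X]

/-- The path-space distance `ρ̄((x_t),(y_t)) = (∑ ρ(x_t,y_t)^p)^{1/p}`. -/
def pathDist (p : ℝ) (d : X → X → ℝ≥0∞) {N : ℕ} :
    (Fin N → X) → (Fin N → X) → ℝ≥0∞ :=
  fun x y => (∑ t, d (x t) (y t) ^ p) ^ (1 / p)

/-- The first `t` coordinates of a path. -/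
def restr {N : ℕ} (t : ℕ) (h : t ≤ N) (x : Fin N → X) : Fin t → X :=
  fun s => x (Fin.castLE h s)

/-- The last `N - t` coordinates of a path. -/
def tailr {N : ℕ} (t : ℕ) (h : t ≤ N) (x : Fin N → X) : Fin (N - t) → X :=
  fun s => x ⟨t + s.1, by have := s.2; omega⟩

/-- A coupling `π` of two path measures is causal: for every `t` and Borel
`A ⊆ 𝒳^t`, `π((Y_1,…,Y_t) ∈ A | X) = π((Y_1,…,Y_t) ∈ A | X_1,…,X_t)` a.s. -/
def Causal {N : ℕ} (π : Measure ((Fin N → X) × (Fin N → X))) : Prop :=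
  ∀ (t : ℕ) (h : t ≤ N) (A : Set (Fin t → X)), MeasurableSet A →
    (π[fun z => A.indicator (fun _ => (1 : ℝ)) (restr t h z.2) |
        MeasurableSpace.comap Prod.fst inferInstance])
      =ᵐ[π]
    (π[fun z => A.indicator (fun _ => (1 : ℝ)) (restr t h z.2) |
        MeasurableSpace.comap (fun z => restr t h z.1) inferInstance])

/-- Bicausal couplings. -/
def Bicausal {N : ℕ} (π : Measure ((Fin N → X) × (Fin N → X))) : Prop :=
  Causal π ∧ Causal (π.map Prod.swap)

/-- The causal Wasserstein "distance" `CW_p`. -/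
def CW (p : ℝ) (d : X → X → ℝ≥0∞) {N : ℕ} (μ ν : Measure (Fin N → X)) : ℝ≥0∞ :=
  ⨅ π ∈ {π ∈ Cpl μ ν | Causal π}, (∫⁻ z, pathDist p d z.1 z.2 ^ p ∂π) ^ (1 / p)

/-- The symmetrized causal Wasserstein distance `SCW_p`. -/
def SCW (p : ℝ) (d : X → X → ℝ≥0∞) {N : ℕ} (μ ν : Measure (Fin N → X)) : ℝ≥0∞ :=
  max (CW p d μ ν) (CW p d ν μ)

/-- The adapted (nested, bicausal) Wasserstein distance `AW_p`. -/
def AW (p : ℝ) (d : X → X → ℝ≥0∞) {N : ℕ} (μ ν : Measure (Fin N → X)) : ℝ≥0∞ :=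
  ⨅ π ∈ {π ∈ Cpl μ ν | Bicausal π}, (∫⁻ z, pathDist p d z.1 z.2 ^ p ∂π) ^ (1 / p)

/-! ### Nested spaces (Pflug's nested distributions / Vershik's iterated spaces) -/

/-- A measurable space together with an `ℝ≥0∞`-valued distance. -/
structure QMS : Type 1 where
  carrier : Type
  inst : MeasurableSpace carrier
  dist : carrier → carrier → ℝ≥0∞

/-- The nested sequence of spaces: `nest X _ d p 0 = 𝒳` (this is `𝒳_N`), and
`nest X _ d p (k+1) = 𝒳 × 𝒫(nest X _ d p k)` with the nested distance
`D = (ρ^p + 𝒲_p^p)^{1/p}`.  Thus `𝒳_1` (for `N = k+1` time points) is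
`nest X _ d p k`. -/
def nest (X : Type) (mX : MeasurableSpace X) (d : X → X → ℝ≥0∞) (p : ℝ) : ℕ → QMS
  | 0 => ⟨X, mX, d⟩
  | (k + 1) =>
    let Q := nest X mX d p k
    ⟨X × @Measure Q.carrier Q.inst,
      @Prod.instMeasurableSpace _ _ mX (@Measure.instMeasurableSpace _ Q.inst),
      fun a b => (d a.1 b.1 ^ p + (@Wp _ Q.inst p Q.dist a.2 b.2) ^ p) ^ (1 / p)⟩

section NMapSec

variable (Y : Type) [mY : MeasurableSpace Y] [TopologicalSpace Y] [PolishSpace Y]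
  [BorelSpace Y] [Nonempty Y]

/-- The map `𝒩` sending the law of a process with `k+1` time steps to the
corresponding nested distribution, via iterated regular conditional laws. -/
def NMap (d : Y → Y → ℝ≥0∞) (p : ℝ) :
    ∀ k : ℕ, Measure (Fin (k + 1) → Y) →
      @Measure (nest Y mY d p k).carrier (nest Y mY d p k).inst
  | 0, μ =>
    letI : MeasurableSpace (nest Y mY d p 0).carrier := (nest Y mY d p 0).inst
    μ.map (fun x => x 0)
  | (k + 1), μ =>
    letI : MeasurableSpace (nest Y mY d p k).carrier := (nest Y mY d p k).inst
    letI : MeasurableSpace (nest Y mY d p (k + 1)).carrier := (nest Y mY d p (k + 1)).inst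
    (μ.map (fun x => x 0)).map
      (fun x₀ => (x₀, NMap d p k
        ((condK (μ.map (fun x => (x 0, fun s : Fin (k + 1) => x s.succ)))) x₀)))

end NMapSec

section PathStructures

variable {Y : Type*} [mY : MeasurableSpace Y]

/-- A process `L` is adapted: `L t` depends only on the first `t+1` coordinates. -/
def AdaptedProc {N : ℕ} (L : Fin N → (Fin N → Y) → ℝ) : Prop :=
  ∀ (t : Fin N) (x y : Fin N → Y), (∀ s : Fin N, s ≤ t → x s = y s) → L t x = L t y

/-- `τ` is a stopping time of the canonical filtration on the path space. -/
def IsStopTime {N : ℕ} (τ : (Fin N → Y) → Fin N) : Prop :=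
  ∀ t : Fin N,
    MeasurableSet[MeasurableSpace.comap (restr (X := Y) (t.1 + 1) t.2) inferInstance]
      {x | τ x = t}

/-- The optimal stopping value `v^L(μ)`. -/
def stopVal {N : ℕ} (L : Fin N → (Fin N → Y) → ℝ) (μ : Measure (Fin N → Y)) : ℝ :=
  ⨅ τ : {τ : (Fin N → Y) → Fin N // IsStopTime τ}, ∫ x, L (τ.1 x) x ∂μ

variable [TopologicalSpace Y]

/-- `AC(X̄)`: adapted processes which are continuous and bounded. -/
def ACbdd {N : ℕ} (L : Fin N → (Fin N → Y) → ℝ) : Prop :=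
  (∀ t, Continuous (L t)) ∧ AdaptedProc L ∧ ∃ C : ℝ, ∀ t x, |L t x| ≤ C

/-- `AC_p(X̄)`: adapted continuous processes of growth of order `p`. -/
def ACp (p : ℝ) (d : Y → Y → ℝ≥0∞) {N : ℕ} (L : Fin N → (Fin N → Y) → ℝ) : Prop :=
  (∀ t, Continuous (L t)) ∧ AdaptedProc L ∧
    ∃ (C : ℝ) (x₀ : Fin N → Y), ∀ t x, |L t x| ≤ C * (1 + ((pathDist p d x₀ x) ^ p).toReal)

/-- The optimal stopping topology (weak version, bounded continuous rewards). -/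
def stopTopW (N : ℕ) : TopologicalSpace (Measure (Fin N → Y)) :=
  ⨅ L : {L : Fin N → (Fin N → Y) → ℝ // ACbdd L},
    TopologicalSpace.induced (stopVal L.1) inferInstance

/-- The `𝒲_p`-optimal stopping topology. -/
def stopTopWp (p : ℝ) (d : Y → Y → ℝ≥0∞) (N : ℕ) :
    TopologicalSpace (Measure (Fin N → Y)) :=
  ⨅ L : {L : Fin N → (Fin N → Y) → ℝ // ACp p d L},
    TopologicalSpace.induced (stopVal L.1) inferInstance

variable [PolishSpace Y] [BorelSpace Y] [Nonempty Y]

/-- Hellwig's map `I_t`, sending `μ` to the joint law of the first `t`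
coordinates together with the conditional law of the remaining coordinates. -/
def infoMap (N t : ℕ) (h : t ≤ N) (μ : Measure (Fin N → Y)) :
    Measure ((Fin t → Y) × Measure (Fin (N - t) → Y)) :=
  μ.map (fun x => (restr t h x,
    condK (μ.map (fun y => (restr t h y, tailr t h y))) (restr t h x)))

/-- Hellwig's information topology (weak version). -/
def infoTopW (N : ℕ) : TopologicalSpace (Measure (Fin N → Y)) :=
  ⨅ (t : ℕ) (_ : 1 ≤ t) (h : t ≤ N - 1),
    TopologicalSpace.induced (infoMap N t (le_trans h (Nat.sub_le N 1)))
      (weakTop (prodTop Pi.topologicalSpace (weakTop Pi.topologicalSpace)))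

/-- The `𝒲_p`-information topology. -/
def infoTopWp (p : ℝ) (d : Y → Y → ℝ≥0∞) (N : ℕ) :
    TopologicalSpace (Measure (Fin N → Y)) :=
  ⨅ (t : ℕ) (_ : 1 ≤ t) (h : t ≤ N - 1),
    TopologicalSpace.induced (infoMap N t (le_trans h (Nat.sub_le N 1)))
      (ballTop (Wp p (prodDist p (pathDist p d) (Wp p (pathDist p d)))))

/-- Aldous' prediction process `Z_t^μ` (as a function of the path). -/
def predict (N : ℕ) (μ : Measure (Fin N → Y)) (t : ℕ) (h : t ≤ N) :
    (Fin N → Y) → Measure (Fin N → Y) :=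
  fun x => condK (μ.map (fun y => (restr t h y, y))) (restr t h x)

/-- Aldous' map `E`, sending `μ` to the joint law of the path together with its
prediction process. -/
def aldousMap (N : ℕ) (μ : Measure (Fin N → Y)) :
    Measure ((Fin N → Y) × (Fin (N + 1) → Measure (Fin N → Y))) :=
  μ.map (fun x =>
    (x, fun t : Fin (N + 1) => predict N μ t.1 (Nat.lt_succ_iff.mp t.2) x))

/-- Aldous' extended weak topology. -/
def aldousTopW (N : ℕ) : TopologicalSpace (Measure (Fin N → Y)) :=
  TopologicalSpace.induced (aldousMap N)
    (weakTop (prodTop Pi.topologicalSpace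
      (@Pi.topologicalSpace (Fin (N + 1)) (fun _ => Measure (Fin N → Y))
        (fun _ => weakTop Pi.topologicalSpace))))

/-- The extended `𝒲_p`-topology. -/
def aldousTopWp (p : ℝ) (d : Y → Y → ℝ≥0∞) (N : ℕ) :
    TopologicalSpace (Measure (Fin N → Y)) :=
  TopologicalSpace.induced (aldousMap N)
    (ballTop (Wp p (prodDist p (pathDist p d)
      (fun Z Z' : Fin (N + 1) → Measure (Fin N → Y) =>
        (∑ t, Wp p (pathDist p d) (Z t) (Z' t) ^ p) ^ (1 / p)))))

end PathStructures

/-! ### The lifted two-time-point space `𝒳₁ × 𝒫_p(𝒳₂)` -/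

section Lifted

variable {A B : Type*} [MeasurableSpace A] [MeasurableSpace B]

/-- The nested distance on `𝒳₁ × 𝒫_p(𝒳₂)`. -/
def liftDist (p : ℝ) (dA : A → A → ℝ≥0∞) (dB : B → B → ℝ≥0∞) :
    (A × Measure B) → (A × Measure B) → ℝ≥0∞ :=
  fun u v => (dA u.1 v.1 ^ p + Wp p dB u.2 v.2 ^ p) ^ (1 / p)

/-- `η` is a version of the measure-valued conditional expectation
`E_γ[X̂₂ | Y⃗]` (i.e. the barycenter of a regular conditional law of `X̂₂`
given `Y⃗ = (Y₁, Ŷ₂)`). -/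
def IsCondBar (γ : Measure ((A × Measure B) × (A × Measure B)))
    (η : (A × Measure B) × (A × Measure B) → Measure B) : Prop :=
  (∃ g : (A × Measure B) → Measure B, Measurable g ∧ ∀ z, η z = g z.2) ∧
  (∀ z, IsProbabilityMeasure (η z)) ∧
  ∀ S : Set (A × Measure B), MeasurableSet S → ∀ E : Set B, MeasurableSet E →
    ∫⁻ z in {z | z.2 ∈ S}, η z E ∂γ = ∫⁻ z in {z | z.2 ∈ S}, z.1.2 E ∂γ

/-- `AW̄_p`, the `p`-Wasserstein distance on `𝒫_p(𝒳₁ × 𝒫_p(𝒳₂))`. -/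
def AWbar (p : ℝ) (dA : A → A → ℝ≥0∞) (dB : B → B → ℝ≥0∞)
    (μ ν : Measure (A × Measure B)) : ℝ≥0∞ :=
  Wp p (liftDist p dA dB) μ ν

/-- `CW̄_p`, the lifted causal Wasserstein "distance". -/
def CWbar (p : ℝ) (dA : A → A → ℝ≥0∞) (dB : B → B → ℝ≥0∞)
    (μ ν : Measure (A × Measure B)) : ℝ≥0∞ :=
  ⨅ γ ∈ Cpl μ ν, ⨅ η ∈ {η | IsCondBar γ η},
    (∫⁻ z, (dA z.1.1 z.2.1 ^ p + Wp p dB (η z) z.2.2 ^ p) ∂γ) ^ (1 / p)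

/-- `SCW̄_p`, the symmetrization of `CW̄_p`. -/
def SCWbar (p : ℝ) (dA : A → A → ℝ≥0∞) (dB : B → B → ℝ≥0∞)
    (μ ν : Measure (A × Measure B)) : ℝ≥0∞ :=
  max (CWbar p dA dB μ ν) (CWbar p dA dB ν μ)

/-- Membership in `𝒫_p(𝒳₁ × 𝒫_p(𝒳₂))`: a probability measure, concentrated on
`𝒳₁ × 𝒫_p(𝒳₂)`, with finite `p`-th moment for the nested distance. -/
def MemPpLift (p : ℝ) (dA : A → A → ℝ≥0∞) (dB : B → B → ℝ≥0∞)
    (μ : Measure (A × Measure B)) : Prop :=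
  IsProbabilityMeasure μ ∧ (∀ᵐ z ∂μ, MemPp p dB z.2) ∧
    ∃ z₀ : A × Measure B, MemPp p dB z₀.2 ∧ ∫⁻ z, liftDist p dA dB z₀ z ^ p ∂μ ≠ ∞

/-- Two-time-point causality: given a coupling `π` of measures on products
`A₁ × B₁` and `A₂ × B₂`, the conditional law of `Y₁` given `X = (X₁, X₂)`
coincides with the conditional law of `Y₁` given `X₁`. -/
def Causal2 {A₁ B₁ A₂ B₂ : Type*} [MeasurableSpace A₁] [MeasurableSpace B₁]
    [MeasurableSpace A₂] [MeasurableSpace B₂]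
    (π : Measure ((A₁ × B₁) × (A₂ × B₂))) : Prop :=
  ∀ S : Set A₂, MeasurableSet S →
    (π[fun z => S.indicator (fun _ => (1 : ℝ)) z.2.1 |
        MeasurableSpace.comap Prod.fst inferInstance])
      =ᵐ[π]
    (π[fun z => S.indicator (fun _ => (1 : ℝ)) z.2.1 |
        MeasurableSpace.comap (fun z => z.1.1) inferInstance])

/-- The two-time-point causal Wasserstein "distance" on `𝒫_p(𝒳₁ × 𝒳₂)`. -/
def CW2 (p : ℝ) (dA : A → A → ℝ≥0∞) (dB : B → B → ℝ≥0∞)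
    (μ ν : Measure (A × B)) : ℝ≥0∞ :=
  ⨅ π ∈ {π ∈ Cpl μ ν | Causal2 π},
    (∫⁻ z, (dA z.1.1 z.2.1 ^ p + dB z.1.2 z.2.2 ^ p) ∂π) ^ (1 / p)

end Lifted

/-!
Only the causal distance in both directions has to be shown to control the full one. Disintegrate
an almost optimal causal coupling of `μ` and `ν` as a kernel `κ`, with `Y⃗ ∼ ν` and
`(X₁, X̂₂) ∼ κ Y⃗`. By the triangle inequality, its full transport cost exceeds its causal cost by
at most the dispersion `(E[W_p(X̂₂, E[X̂₂ | Y⃗])^p])^{1/p}`.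

For a Lipschitz function `f` with values in `[0, 1]`, compare the second moments of
`m ↦ ∫ f dm` under `μ`, under the law of `E[X̂₂ | Y⃗]`, and under `ν`. Jensen's inequality puts the
first above the second, with the variance of `∫ f dX̂₂` given `Y⃗` as defect; causal closeness of
`μ` to `ν` makes the second at least almost the third; causal closeness of `ν` to `μ` makes the
third at least almost the first. Hence the variance is small. Approximating in `L¹` of the mean
measure of `μ`, `f` may be replaced by the indicators of the fibres of a nearest-point map of finite
range, which bounds the dispersion.
-/

/-! ### Standard Borel spaces of probability measures -/

section StandardBorel

variable {X Y : Type*} [MeasurableSpace X] [MeasurableSpace Y]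

theorem standardBorelSpace_of_measurableEquiv [StandardBorelSpace Y] (e : X ≃ᵐ Y) :
    StandardBorelSpace X := by
  let _ := upgradeStandardBorel Y
  let _ : TopologicalSpace X := TopologicalSpace.induced e inferInstance
  refine ⟨⟨inferInstance, ⟨?_⟩, e.toEquiv.polishSpace_induced⟩⟩
  exact e.measurableEmbedding.comap_eq.symm.trans
    ((congrArg _ (eq_borel_upgradeStandardBorel Y)).trans borel_comap.symm)

theorem standardBorelSpace_of_measurableEmbedding [StandardBorelSpace Y] {f : X → Y}
    (hf : MeasurableEmbedding f) : StandardBorelSpace X :=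
  have := hf.measurableSet_range.standardBorel
  standardBorelSpace_of_measurableEquiv hf.equivRange

theorem standardBorelSpace_of_leftInverse [StandardBorelSpace Y] {f : X → Y} {g : Y → X}
    (hf : Measurable f) (hg : Measurable g) (hgf : Function.LeftInverse g f) :
    StandardBorelSpace X := by
  have hrange : Set.range f = {y | f (g y) = y} :=
    Set.ext fun y => ⟨fun ⟨x, hx⟩ => hx ▸ congrArg f (hgf x), fun hy => ⟨g y, hy⟩⟩
  refine standardBorelSpace_of_measurableEmbedding
    (MeasurableEmbedding.of_measurable_inverse hf ?_ hg hgf)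
  exact hrange ▸ measurableSet_eq_fun (hf.comp hg) measurable_id

theorem isRatStieltjesPoint_cdf (m : Measure ℝ) :
    IsRatStieltjesPoint (fun (F : ℚ → ℝ) => F) (fun q : ℚ => cdf m q) where
  mono _ _ h := monotone_cdf m (Rat.cast_le.2 h)
  tendsto_atTop_one := (tendsto_cdf_atTop m).comp (tendsto_ratCast_atTop_iff.2 tendsto_id)
  tendsto_atBot_zero := (tendsto_cdf_atBot m).comp (tendsto_ratCast_atBot_iff.2 tendsto_id)
  iInf_rat_gt_eq q := by
    refine Eq.trans ?_ ((cdf m).iInf_rat_gt_eq q)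
    exact Equiv.iInf_congr (Equiv.subtypeEquivRight fun r => by simp) fun r => rfl

/-- A probability measure on `ℝ` can be recovered measurably from its distribution function on
the rationals. -/
instance standardBorelSpace_probabilityMeasure_real :
    StandardBorelSpace (ProbabilityMeasure ℝ) := by
  let F : ProbabilityMeasure ℝ → ℚ → ℝ := fun m q => cdf (m : Measure ℝ) q
  let G : (ℚ → ℝ) → ProbabilityMeasure ℝ := fun f =>
    ⟨(stieltjesOfMeasurableRat (fun f => f) measurable_id f).measure,
      ⟨measure_stieltjesOfMeasurableRat_univ _ f⟩⟩
  have hF : Measurable F := by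
    refine measurable_pi_lambda _ fun q => ?_
    simp only [F, cdf_eq_real]
    exact ((Measure.measurable_coe measurableSet_Iic).comp measurable_subtype_coe).ennreal_toReal
  have hG : Measurable G :=
    (measurable_measure_stieltjesOfMeasurableRat measurable_id).subtype_mk
  refine standardBorelSpace_of_leftInverse hF hG fun m => Subtype.ext ?_
  refine ext_of_generate_finite _ (Real.borel_eq_generateFrom_Iic_rat ▸ BorelSpace.measurable_eq)
    Real.isPiSystem_Iic_rat (fun s hs => ?_) (by simp [G])
  obtain ⟨q, rfl⟩ := Set.mem_iUnion.1 hs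
  simp only [G, measure_stieltjesOfMeasurableRat_Iic, stieltjesOfMeasurableRat_eq,
    toRatCDF_of_isRatStieltjesPoint (isRatStieltjesPoint_cdf (m : Measure ℝ)), F, ofReal_cdf]
  rfl

instance standardBorelSpace_probabilityMeasure [StandardBorelSpace X] :
    StandardBorelSpace (ProbabilityMeasure X) := by
  cases isEmpty_or_nonempty X
  · have : IsEmpty (ProbabilityMeasure X) :=
      ⟨fun m => (nonempty_of_isProbabilityMeasure (m : Measure X)).elim isEmptyElim⟩
    infer_instance
  obtain ⟨e, he⟩ := exists_measurableEmbedding_real X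
  obtain ⟨r, hr, hre⟩ := he.exists_measurable_extend measurable_id fun _ => ‹Nonempty X›
  refine standardBorelSpace_of_leftInverse (Y := ProbabilityMeasure ℝ)
    (f := fun m : ProbabilityMeasure X => m.map he.measurable.aemeasurable)
    (g := fun m : ProbabilityMeasure ℝ => m.map hr.aemeasurable)
    ((Measure.measurable_map _ he.measurable).comp measurable_subtype_coe).subtype_mk
    ((Measure.measurable_map _ hr).comp measurable_subtype_coe).subtype_mk
    fun m => Subtype.ext ?_
  simp [Measure.map_map hr he.measurable, hre]

end StandardBorel

/-! ### Moments and optimal transport -/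

section LpCost

variable {Z Y : Type*} [MeasurableSpace Z] [MeasurableSpace Y] {p : ℝ} {P : Measure Z}
  {f g : Z → ℝ≥0∞}

/-- The `L^p` norm of an `ℝ≥0∞`-valued function; the cost of a transport plan is the `lpCost` of
the distance under the plan. -/
def lpCost (p : ℝ) (P : Measure Z) (f : Z → ℝ≥0∞) : ℝ≥0∞ :=
  (∫⁻ z, f z ^ p ∂P) ^ (1 / p)

/-- The `ℓ^p` sum of two extended nonnegative numbers. -/
def lpAdd (p : ℝ) (a b : ℝ≥0∞) : ℝ≥0∞ :=
  (a ^ p + b ^ p) ^ (1 / p)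

theorem lpCost_rpow (hp : 0 < p) (P : Measure Z) (f : Z → ℝ≥0∞) :
    lpCost p P f ^ p = ∫⁻ z, f z ^ p ∂P := by
  rw [lpCost, one_div, ENNReal.rpow_inv_rpow hp.ne']

theorem lpAdd_rpow (hp : 0 < p) (a b : ℝ≥0∞) : lpAdd p a b ^ p = a ^ p + b ^ p := by
  rw [lpAdd, one_div, ENNReal.rpow_inv_rpow hp.ne']

theorem lpAdd_comm (p : ℝ) (a b : ℝ≥0∞) : lpAdd p a b = lpAdd p b a := by
  rw [lpAdd, lpAdd, add_comm]

theorem lpAdd_mono (hp : 0 < p) {a a' b b' : ℝ≥0∞} (ha : a ≤ a') (hb : b ≤ b') :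
    lpAdd p a b ≤ lpAdd p a' b' := by
  unfold lpAdd
  gcongr

theorem le_lpAdd_left (hp : 0 < p) (a b : ℝ≥0∞) : a ≤ lpAdd p a b := by
  rw [← ENNReal.rpow_le_rpow_iff hp, lpAdd_rpow hp]
  exact le_self_add

theorem le_lpAdd_right (hp : 0 < p) (a b : ℝ≥0∞) : b ≤ lpAdd p a b :=
  lpAdd_comm p b a ▸ le_lpAdd_left hp b a

theorem lpAdd_zero_left (hp : 0 < p) (a : ℝ≥0∞) : lpAdd p 0 a = a := by
  rw [lpAdd, ENNReal.zero_rpow_of_pos hp, zero_add, one_div, ENNReal.rpow_rpow_inv hp.ne']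

theorem lpAdd_add_add_le (hp : 1 ≤ p) (a a' b b' : ℝ≥0∞) :
    lpAdd p (a + a') (b + b') ≤ lpAdd p a b + lpAdd p a' b' := by
  simpa [lpAdd] using ENNReal.Lp_add_le Finset.univ ![a, b] ![a', b'] hp

theorem lpAdd_add_right_le (hp : 1 ≤ p) (a b c : ℝ≥0∞) :
    lpAdd p a (b + c) ≤ lpAdd p a b + c := by
  simpa [lpAdd_zero_left (one_pos.trans_le hp)] using lpAdd_add_add_le hp a 0 b c

theorem measurable_lpAdd (hf : Measurable f) (hg : Measurable g) :
    Measurable fun z => lpAdd p (f z) (g z) :=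
  ((hf.pow_const p).add (hg.pow_const p)).pow_const _

theorem lpCost_mono_ae (hp : 0 < p) (h : f ≤ᵐ[P] g) : lpCost p P f ≤ lpCost p P g := by
  refine ENNReal.rpow_le_rpow (lintegral_mono_ae ?_) (by positivity)
  filter_upwards [h] with z hz
  gcongr

theorem lpCost_mono (hp : 0 < p) (h : ∀ z, f z ≤ g z) : lpCost p P f ≤ lpCost p P g :=
  lpCost_mono_ae hp (ae_of_all _ h)

theorem lpCost_zero (hp : 0 < p) : lpCost p P (fun _ => 0) = 0 := by
  simp [lpCost, hp]

theorem lpCost_const (hp : 0 < p) [IsProbabilityMeasure P] (a : ℝ≥0∞) :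
    lpCost p P (fun _ => a) = a := by
  simp [lpCost, ← ENNReal.rpow_mul, hp.ne']

theorem lpCost_rpow_one_div (hp : 0 < p) :
    lpCost p P (fun z => f z ^ (1 / p)) = (∫⁻ z, f z ∂P) ^ (1 / p) := by
  simp [lpCost, ENNReal.rpow_inv_rpow hp.ne']

theorem lpCost_add_le (hp : 1 ≤ p) (hf : AEMeasurable f P) (hg : AEMeasurable g P) :
    lpCost p P (fun z => f z + g z) ≤ lpCost p P f + lpCost p P g :=
  ENNReal.lintegral_Lp_add_le hf hg hp

theorem lpCost_add_const_le (hp : 1 ≤ p) [IsProbabilityMeasure P] (hf : AEMeasurable f P)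
    (a : ℝ≥0∞) : lpCost p P (fun z => f z + a) ≤ lpCost p P f + a :=
  (lpCost_add_le hp hf aemeasurable_const).trans_eq
    (congrArg _ (lpCost_const (one_pos.trans_le hp) a))

theorem lpCost_lpAdd (hp : 0 < p) (hf : Measurable f) :
    lpCost p P (fun z => lpAdd p (f z) (g z)) = lpAdd p (lpCost p P f) (lpCost p P g) := by
  rw [lpAdd, lpCost_rpow hp, lpCost_rpow hp, ← lintegral_add_left (hf.pow_const p), lpCost]
  simp_rw [lpAdd_rpow hp]

theorem lpCost_map {φ : Y → Z} {Q : Measure Y} (hf : Measurable f) (hφ : Measurable φ) :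
    lpCost p (Q.map φ) f = lpCost p Q (f ∘ φ) := by
  simp [lpCost, lintegral_map (hf.pow_const p) hφ]

theorem lpCost_bind (hp : 0 < p) {Q : Measure Y} {κ : Y → Measure Z} (hf : Measurable f)
    (hκ : AEMeasurable κ Q) :
    lpCost p (Q.bind κ) f = lpCost p Q fun y => lpCost p (κ y) f := by
  rw [lpCost, Measure.lintegral_bind hκ (hf.pow_const p).aemeasurable, lpCost]
  simp only [lpCost_rpow hp]

theorem lpCost_compProd (hp : 0 < p) [SFinite P] {κ : Kernel Z Y} [IsSFiniteKernel κ]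
    {h : Z × Y → ℝ≥0∞} (hh : Measurable h) :
    lpCost p (P ⊗ₘ κ) h = lpCost p P fun z => lpCost p (κ z) fun y => h (z, y) := by
  rw [lpCost, Measure.lintegral_compProd (hh.pow_const p), lpCost]
  simp only [lpCost_rpow hp]

theorem measurable_lpCost (hf : Measurable f) : Measurable fun P : Measure Z => lpCost p P f :=
  (Measure.measurable_lintegral (hf.pow_const p)).pow_const _

end LpCost

section Coupling

variable {X Y Z : Type*} [MeasurableSpace X] [MeasurableSpace Y] [MeasurableSpace Z]

theorem isProbabilityMeasure_of_mem_Cpl {μ : Measure X} {ν : Measure Y} [IsProbabilityMeasure μ]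
    {γ : Measure (X × Y)} (hγ : γ ∈ Cpl μ ν) : IsProbabilityMeasure γ :=
  (Measure.isProbabilityMeasure_map_iff measurable_fst.aemeasurable).1 (hγ.1 ▸ ‹_›)

theorem prod_mem_Cpl (μ : Measure X) (ν : Measure Y) [IsProbabilityMeasure μ]
    [IsProbabilityMeasure ν] : μ.prod ν ∈ Cpl μ ν := by
  simp [Cpl, Measure.map_fst_prod, Measure.map_snd_prod]

theorem map_swap_mem_Cpl {μ : Measure X} {ν : Measure Y} {γ : Measure (X × Y)}
    (hγ : γ ∈ Cpl μ ν) : γ.map Prod.swap ∈ Cpl ν μ := by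
  constructor
  · rw [Measure.map_map measurable_fst measurable_swap]
    exact hγ.2
  · rw [Measure.map_map measurable_snd measurable_swap]
    exact hγ.1

theorem map_prodMap_mem_Cpl {X' Y' : Type*} [MeasurableSpace X'] [MeasurableSpace Y']
    {μ : Measure X} {ν : Measure Y} {γ : Measure (X × Y)} (hγ : γ ∈ Cpl μ ν) {f : X → X'}
    {g : Y → Y'} (hf : Measurable f) (hg : Measurable g) :
    γ.map (Prod.map f g) ∈ Cpl (μ.map f) (ν.map g) := by
  constructor
  · rw [Measure.map_map measurable_fst (hf.prodMap hg), ← hγ.1,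
      Measure.map_map hf measurable_fst]
    rfl
  · rw [Measure.map_map measurable_snd (hf.prodMap hg), ← hγ.2,
      Measure.map_map hg measurable_snd]
    rfl

theorem exists_eq_map_of_mem_Cpl_map {X' Y' : Type*} [MeasurableSpace X'] [MeasurableSpace Y']
    {μ : Measure X} {ν : Measure Y} {f : X → X'} {g : Y → Y'} (hf : MeasurableEmbedding f)
    (hg : MeasurableEmbedding g) {γ : Measure (X' × Y')} (hγ : γ ∈ Cpl (μ.map f) (ν.map g)) :
    ∃ γ' ∈ Cpl μ ν, γ'.map (Prod.map f g) = γ := by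
  have hfg := hf.prodMap hg
  obtain ⟨γ, rfl⟩ : ∃ γ' : Measure (X × Y), γ'.map (Prod.map f g) = γ := by
    refine ⟨γ.comap (Prod.map f g), ?_⟩
    rw [hfg.map_comap, Measure.restrict_eq_self_of_ae_mem]
    have h₁ : ∀ᵐ z ∂γ, z.1 ∈ Set.range f := ae_of_ae_map measurable_fst.aemeasurable
      (hγ.1 ▸ hf.ae_map_iff.2 (ae_of_all _ Set.mem_range_self))
    have h₂ : ∀ᵐ z ∂γ, z.2 ∈ Set.range g := ae_of_ae_map measurable_snd.aemeasurable
      (hγ.2 ▸ hg.ae_map_iff.2 (ae_of_all _ Set.mem_range_self))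
    filter_upwards [h₁, h₂] with z hz₁ hz₂
    exact Set.range_prodMap ▸ ⟨hz₁, hz₂⟩
  refine ⟨γ, ⟨?_, ?_⟩, rfl⟩
  · rw [← hf.comap_map μ, ← hγ.1, Measure.map_map measurable_fst hfg.measurable,
      ← hf.comap_map (γ.map Prod.fst), Measure.map_map hf.measurable measurable_fst]
    rfl
  · rw [← hg.comap_map ν, ← hγ.2, Measure.map_map measurable_snd hfg.measurable,
      ← hg.comap_map (γ.map Prod.snd), Measure.map_map hg.measurable measurable_snd]
    rfl

theorem bind_mem_Cpl {ρ : Measure Z} {U : Z → Measure X} {V : Z → Measure Y}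
    {π : Z → Measure (X × Y)} (hπm : Measurable π) (hπ : ∀ z, π z ∈ Cpl (U z) (V z)) :
    ρ.bind π ∈ Cpl (ρ.bind U) (ρ.bind V) := by
  have hU : U = fun z => (π z).map Prod.fst := funext fun z => (hπ z).1.symm
  have hV : V = fun z => (π z).map Prod.snd := funext fun z => (hπ z).2.symm
  have hUm : Measurable U := hU ▸ (Measure.measurable_map _ measurable_fst).comp hπm
  have hVm : Measurable V := hV ▸ (Measure.measurable_map _ measurable_snd).comp hπm
  constructor <;> refine Measure.ext fun s hs => ?_
  · rw [Measure.map_apply measurable_fst hs,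
      Measure.bind_apply (measurable_fst hs) hπm.aemeasurable,
      Measure.bind_apply hs hUm.aemeasurable]
    simp only [hU, Measure.map_apply measurable_fst hs]
  · rw [Measure.map_apply measurable_snd hs,
      Measure.bind_apply (measurable_snd hs) hπm.aemeasurable,
      Measure.bind_apply hs hVm.aemeasurable]
    simp only [hV, Measure.map_apply measurable_snd hs]

theorem exists_gluing [StandardBorelSpace Z] [Nonempty Z] {μ : Measure X} {ν : Measure Y}
    {ρ : Measure Z} [IsProbabilityMeasure μ] [IsProbabilityMeasure ν] {γ : Measure (X × Y)}
    {γ' : Measure (Y × Z)} (hγ : γ ∈ Cpl μ ν) (hγ' : γ' ∈ Cpl ν ρ) :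
    ∃ Γ : Measure ((X × Y) × Z), Γ.map Prod.fst = γ ∧ Γ.map (fun w => (w.1.2, w.2)) = γ' := by
  have := isProbabilityMeasure_of_mem_Cpl hγ
  have := isProbabilityMeasure_of_mem_Cpl hγ'
  refine ⟨γ ⊗ₘ γ'.condKernel.prodMkLeft X, Measure.fst_compProd .., ?_⟩
  have hγ'_eq : γ.map Prod.snd ⊗ₘ γ'.condKernel = γ' :=
    (congrArg (· ⊗ₘ _) (hγ.2.trans hγ'.1.symm)).trans (γ'.disintegrate γ'.condKernel)
  refine Eq.trans ?_ hγ'_eq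
  refine Measure.ext_of_lintegral _ fun f hf => ?_
  rw [lintegral_map hf (by fun_prop), Measure.lintegral_compProd (by fun_prop),
    Measure.lintegral_compProd hf,
    lintegral_map (hf.lintegral_kernel_prod_right' (κ := γ'.condKernel)) measurable_snd]
  rfl

theorem map_swap_compProd_mem_Cpl_iff {μ : Measure X} {ν : Measure Y} [SFinite ν]
    {κ : Kernel Y X} [IsMarkovKernel κ] : (ν ⊗ₘ κ).map Prod.swap ∈ Cpl μ ν ↔ κ ∘ₘ ν = μ := by
  have hfst : ((ν ⊗ₘ κ).map Prod.swap).map Prod.fst = κ ∘ₘ ν := by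
    rw [Measure.map_map measurable_fst measurable_swap, ← Measure.snd_compProd]
    rfl
  have hsnd : ((ν ⊗ₘ κ).map Prod.swap).map Prod.snd = ν := by
    rw [Measure.map_map measurable_snd measurable_swap]
    exact Measure.fst_compProd ν κ
  simp only [Cpl, Set.mem_ofPred_eq, hfst, hsnd, and_true]

theorem exists_map_swap_compProd_eq [StandardBorelSpace X] {μ : Measure X} {ν : Measure Y}
    [IsProbabilityMeasure μ] {γ : Measure (X × Y)} (hγ : γ ∈ Cpl μ ν) :
    ∃ κ : Kernel Y X, IsMarkovKernel κ ∧ (ν ⊗ₘ κ).map Prod.swap = γ := by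
  have := nonempty_of_isProbabilityMeasure μ
  have := isProbabilityMeasure_of_mem_Cpl hγ
  have : IsProbabilityMeasure (γ.map Prod.swap) :=
    Measure.isProbabilityMeasure_map measurable_swap.aemeasurable
  have hdisint : ν ⊗ₘ (γ.map Prod.swap).condKernel = γ.map Prod.swap :=
    (congrArg (· ⊗ₘ _) (map_swap_mem_Cpl hγ).1.symm).trans ((γ.map Prod.swap).disintegrate _)
  refine ⟨(γ.map Prod.swap).condKernel, inferInstance, ?_⟩
  rw [hdisint, Measure.map_map measurable_swap measurable_swap, Prod.swap_swap_eq,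
    Measure.map_id]

end Coupling

section Wasserstein

variable {Z Y : Type*} [MeasurableSpace Z] [MeasurableSpace Y] {p : ℝ} {d : Z → Z → ℝ≥0∞}
  {μ ν ρ : Measure Z}

/-- A jointly measurable pseudometric with values in `ℝ≥0∞`. It replaces a
`PseudoEMetricSpace` instance for the distances, such as `liftDist`, whose topology plays no
role. -/
structure IsMeasurableEDist (d : Z → Z → ℝ≥0∞) : Prop where
  self : ∀ x, d x x = 0
  comm : ∀ x y, d x y = d y x
  triangle : ∀ x y z, d x z ≤ d x y + d y z
  measurable : Measurable fun z : Z × Z => d z.1 z.2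

theorem IsMeasurableEDist.measurable_comp {Ω : Type*} [MeasurableSpace Ω]
    (hd : IsMeasurableEDist d) {f g : Ω → Z} (hf : Measurable f) (hg : Measurable g) :
    Measurable fun ω => d (f ω) (g ω) :=
  hd.measurable.comp (hf.prodMk hg)

theorem Wp_le_lpCost {γ : Measure (Z × Z)} (hγ : γ ∈ Cpl μ ν) :
    Wp p d μ ν ≤ lpCost p γ fun z => d z.1 z.2 :=
  iInf₂_le γ hγ

theorem Wp_lt_iff {r : ℝ≥0∞} :
    Wp p d μ ν < r ↔ ∃ γ ∈ Cpl μ ν, lpCost p γ (fun z => d z.1 z.2) < r := by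
  simp [Wp, iInf_lt_iff, lpCost]

theorem exists_mem_Cpl_lintegral_le (hp : 0 < p) [IsProbabilityMeasure μ]
    [IsProbabilityMeasure ν] {ε : ℝ≥0∞} (hε : 0 < ε) :
    ∃ γ ∈ Cpl μ ν, ∫⁻ z, d z.1 z.2 ^ p ∂γ ≤ Wp p d μ ν ^ p + ε := by
  rcases eq_or_ne (Wp p d μ ν) ∞ with h | h
  · exact ⟨μ.prod ν, prod_mem_Cpl μ ν, by simp [h, hp]⟩
  have hlt : Wp p d μ ν < (Wp p d μ ν ^ p + ε) ^ (1 / p) := by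
    rw [one_div, ENNReal.lt_rpow_inv_iff hp]
    exact ENNReal.lt_add_right (ENNReal.rpow_ne_top_of_nonneg hp.le h) hε.ne'
  obtain ⟨γ, hγ, hγlt⟩ := Wp_lt_iff.1 hlt
  refine ⟨γ, hγ, (ENNReal.rpow_lt_rpow_iff (z := 1 / p) (by positivity)).1 hγlt |>.le⟩

theorem Wp_self (hp : 0 < p) (hd : IsMeasurableEDist d) (μ : Measure Z) : Wp p d μ μ = 0 := by
  have hdiag : Measurable fun x : Z => (x, x) := measurable_id.prodMk measurable_id
  have hγ : μ.map (fun x => (x, x)) ∈ Cpl μ μ := by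
    constructor
    · rw [Measure.map_map measurable_fst hdiag]
      exact Measure.map_id
    · rw [Measure.map_map measurable_snd hdiag]
      exact Measure.map_id
  refine le_antisymm ((Wp_le_lpCost hγ).trans_eq ?_) zero_le
  rw [lpCost_map hd.measurable hdiag]
  simpa [Function.comp_def, hd.self] using lpCost_zero hp

theorem Wp_comm (hd : IsMeasurableEDist d) (μ ν : Measure Z) : Wp p d μ ν = Wp p d ν μ := by
  have key : ∀ μ ν : Measure Z, Wp p d μ ν ≤ Wp p d ν μ := fun μ ν => by
    refine le_iInf₂ fun γ hγ => (Wp_le_lpCost (map_swap_mem_Cpl hγ)).trans_eq ?_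
    rw [lpCost_map hd.measurable measurable_swap]
    simp only [Function.comp_def, Prod.fst_swap, Prod.snd_swap, lpCost, hd.comm]
  exact (key μ ν).antisymm (key ν μ)

theorem Wp_triangle [StandardBorelSpace Z] (hp : 1 ≤ p) (hd : IsMeasurableEDist d)
    [IsProbabilityMeasure μ] [IsProbabilityMeasure ν] :
    Wp p d μ ρ ≤ Wp p d μ ν + Wp p d ν ρ := by
  have := nonempty_of_isProbabilityMeasure μ
  conv_rhs => unfold Wp
  simp only [ENNReal.iInf_add, ENNReal.add_iInf]
  refine le_iInf₂ fun γ' hγ' => le_iInf₂ fun γ hγ => ?_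
  obtain ⟨Γ, rfl, rfl⟩ := exists_gluing hγ hγ'
  have hΓ : Γ.map (fun w => (w.1.1, w.2)) ∈ Cpl μ ρ := by
    rw [← hγ.1, ← hγ'.2]
    constructor <;> rw [Measure.map_map (by fun_prop) (by fun_prop),
      Measure.map_map (by fun_prop) (by fun_prop)] <;> rfl
  calc Wp p d μ ρ
      ≤ lpCost p Γ (fun w => d w.1.1 w.2) :=
        (Wp_le_lpCost hΓ).trans_eq (lpCost_map hd.measurable (by fun_prop))
    _ ≤ lpCost p Γ (fun w => d w.1.1 w.1.2 + d w.1.2 w.2) :=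
        lpCost_mono (by positivity) fun w => hd.triangle ..
    _ ≤ lpCost p Γ (fun w => d w.1.1 w.1.2) + lpCost p Γ (fun w => d w.1.2 w.2) :=
        lpCost_add_le hp (hd.measurable_comp (by fun_prop) (by fun_prop)).aemeasurable
          (hd.measurable_comp (by fun_prop) (by fun_prop)).aemeasurable
    _ = _ := congrArg₂ (· + ·) (lpCost_map hd.measurable measurable_fst).symm
        (lpCost_map (φ := fun w : (Z × Z) × Z => (w.1.2, w.2)) hd.measurable (by fun_prop)).symm

theorem Wp_map_le {d : Y → Y → ℝ≥0∞} (hd : Measurable fun z : Y × Y => d z.1 z.2)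
    {f : Z → Y} (hf : Measurable f) :
    Wp p d (μ.map f) (ν.map f) ≤ Wp p (fun x y => d (f x) (f y)) μ ν :=
  le_iInf₂ fun _ hγ => (Wp_le_lpCost (map_prodMap_mem_Cpl hγ hf hf)).trans_eq
    (lpCost_map hd (hf.prodMap hf))

theorem Wp_map_measurableEmbedding {d : Y → Y → ℝ≥0∞} {e : Z → Y} (he : MeasurableEmbedding e) :
    Wp p d (μ.map e) (ν.map e) = Wp p (fun x y => d (e x) (e y)) μ ν := by
  have hcost : ∀ γ : Measure (Z × Z), lpCost p (γ.map (Prod.map e e)) (fun z => d z.1 z.2) =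
      lpCost p γ fun z => d (e z.1) (e z.2) := fun γ => by
    rw [lpCost, (he.prodMap he).lintegral_map]
    rfl
  refine le_antisymm (le_iInf₂ fun γ hγ => ?_) (le_iInf₂ fun γ hγ => ?_)
  · exact (Wp_le_lpCost (map_prodMap_mem_Cpl hγ he.measurable he.measurable)).trans_eq (hcost γ)
  · obtain ⟨γ, hγ', rfl⟩ := exists_eq_map_of_mem_Cpl_map he he hγ
    exact (Wp_le_lpCost (d := fun x y => d (e x) (e y)) hγ').trans_eq (hcost γ).symm

theorem Wp_self_map_le (hd : Measurable fun z : Z × Z => d z.1 z.2) {f : Z → Z}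
    (hf : Measurable f) : Wp p d μ (μ.map f) ≤ lpCost p μ fun x => d x (f x) := by
  have hgraph : Measurable fun x => (x, f x) := measurable_id.prodMk hf
  refine (Wp_le_lpCost (γ := μ.map fun x => (x, f x)) ⟨?_, ?_⟩).trans_eq (lpCost_map hd hgraph)
  · rw [Measure.map_map measurable_fst hgraph]
    exact Measure.map_id
  · rw [Measure.map_map measurable_snd hgraph]
    rfl

theorem lpCost_le_lpCost_add_Wp (hp : 1 ≤ p) (hd : Measurable fun z : Z × Z => d z.1 z.2)
    {f : Z → ℝ≥0∞} (hf : Measurable f) (hfd : ∀ x y, f x ≤ f y + d x y) :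
    lpCost p μ f ≤ lpCost p ν f + Wp p d μ ν := by
  conv_rhs => unfold Wp
  simp only [ENNReal.add_iInf]
  refine le_iInf₂ fun γ hγ => ?_
  calc lpCost p μ f = lpCost p γ (fun z => f z.1) := hγ.1 ▸ lpCost_map hf measurable_fst
    _ ≤ lpCost p γ (fun z => f z.2 + d z.1 z.2) :=
        lpCost_mono (by positivity) fun z => hfd z.1 z.2
    _ ≤ lpCost p γ (fun z => f z.2) + lpCost p γ (fun z => d z.1 z.2) :=
        lpCost_add_le hp (hf.comp measurable_snd).aemeasurable hd.aemeasurable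
    _ = lpCost p ν f + _ := congrArg (· + _) (hγ.2 ▸ (lpCost_map hf measurable_snd).symm)

theorem Wp_bind_le_of_discrete [DiscreteMeasurableSpace Y] (hp : 0 < p)
    (hd : Measurable fun z : Z × Z => d z.1 z.2) {P : Measure Y} [IsProbabilityMeasure P]
    {U V : Y → Measure Z} (hU : ∀ y, IsProbabilityMeasure (U y))
    (hV : ∀ y, IsProbabilityMeasure (V y)) :
    Wp p d (P.bind U) (P.bind V) ≤ lpCost p P fun y => Wp p d (U y) (V y) := by
  rw [← ENNReal.rpow_le_rpow_iff hp, lpCost_rpow hp]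
  refine ENNReal.le_of_forall_pos_le_add fun ε hε _ => ?_
  choose π hπ hπε using fun y =>
    exists_mem_Cpl_lintegral_le (d := d) (μ := U y) (ν := V y) hp (ENNReal.coe_pos.2 hε)
  have hπm : Measurable π := .of_discrete
  calc Wp p d (P.bind U) (P.bind V) ^ p
      ≤ lpCost p (P.bind π) (fun z => d z.1 z.2) ^ p := by
        gcongr
        exact Wp_le_lpCost (bind_mem_Cpl hπm hπ)
    _ = ∫⁻ y, ∫⁻ z, d z.1 z.2 ^ p ∂(π y) ∂P := by
        rw [lpCost_rpow hp, Measure.lintegral_bind hπm.aemeasurable (hd.pow_const p).aemeasurable]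
    _ ≤ ∫⁻ y, (Wp p d (U y) (V y) ^ p + ε) ∂P := lintegral_mono hπε
    _ = ∫⁻ y, Wp p d (U y) (V y) ^ p ∂P + ε := by
        rw [lintegral_add_right _ measurable_const, lintegral_const, measure_univ, mul_one]

end Wasserstein

section CommonPart

variable {Z : Type*} [MeasurableSpace Z] {p : ℝ} {d : Z → Z → ℝ≥0∞} {m n : Measure Z}
  [IsProbabilityMeasure m] [IsProbabilityMeasure n]

theorem inv_smul_smul_of_measure_univ_eq {M : ℝ≥0∞} (hM : M ≠ ∞) {ρ : Measure Z}
    (hρ : ρ Set.univ = M) : M⁻¹ • M • ρ = ρ := by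
  rcases eq_or_ne M 0 with h0 | h0
  · simp [Measure.measure_univ_eq_zero.1 (hρ.trans h0)]
  · rw [smul_smul, ENNReal.inv_mul_cancel h0 hM, one_smul]

/-- Leave the common part in place and couple the remainders independently. -/
theorem Wp_rpow_le_of_common_part (hp : 0 < p) (hd : Measurable fun z : Z × Z => d z.1 z.2)
    (hself : ∀ x, d x x = 0) {D : ℝ≥0∞} (hD : ∀ x y, d x y ≤ D) {c : Measure Z} (hcm : c ≤ m)
    (hcn : c ≤ n) : Wp p d m n ^ p ≤ D ^ p * (1 - c Set.univ) := by
  have : IsFiniteMeasure c := isFiniteMeasure_of_le m hcm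
  have hdiag : Measurable fun x : Z => (x, x) := measurable_id.prodMk measurable_id
  set M := 1 - c Set.univ
  have hM : M ≠ ∞ := ENNReal.sub_ne_top ENNReal.one_ne_top
  have hmc : (m - c) Set.univ = M := by simp [M, Measure.sub_apply, hcm]
  have hnc : (n - c) Set.univ = M := by simp [M, Measure.sub_apply, hcn]
  let γ := c.map (fun x => (x, x)) + M⁻¹ • (m - c).prod (n - c)
  have hγ : γ ∈ Cpl m n := by
    constructor
    · rw [Measure.map_add _ _ measurable_fst, Measure.map_map measurable_fst hdiag,
        Measure.map_smul, Measure.map_fst_prod, hnc, inv_smul_smul_of_measure_univ_eq hM hmc]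
      exact (congrArg (· + _) Measure.map_id).trans
        ((add_comm _ _).trans (Measure.sub_add_cancel_of_le hcm))
    · rw [Measure.map_add _ _ measurable_snd, Measure.map_map measurable_snd hdiag,
        Measure.map_smul, Measure.map_snd_prod, hmc, inv_smul_smul_of_measure_univ_eq hM hnc]
      exact (congrArg (· + _) Measure.map_id).trans
        ((add_comm _ _).trans (Measure.sub_add_cancel_of_le hcn))
  calc Wp p d m n ^ p
      ≤ ∫⁻ z, d z.1 z.2 ^ p ∂γ := by
        rw [← lpCost_rpow hp]
        gcongr
        exact Wp_le_lpCost hγ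
    _ = M⁻¹ * ∫⁻ z, d z.1 z.2 ^ p ∂(m - c).prod (n - c) := by
        rw [lintegral_add_measure, lintegral_map (hd.pow_const p) hdiag, lintegral_smul_measure]
        simp [hself, hp]
    _ ≤ M⁻¹ * ∫⁻ _, D ^ p ∂(m - c).prod (n - c) := by
        gcongr with z
        exact hD ..
    _ = D ^ p * (M⁻¹ * M * M) := by
        rw [lintegral_const, ← Set.univ_prod_univ, Measure.prod_prod, hmc, hnc]
        ring
    _ ≤ D ^ p * M := by
        gcongr
        exact mul_le_of_le_one_left' (ENNReal.inv_mul_le_one M)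

theorem Wp_rpow_le_of_fintype [Fintype Z] [DiscreteMeasurableSpace Z] (hp : 0 < p)
    (hself : ∀ x, d x x = 0) {D : ℝ≥0∞} (hD : ∀ x y, d x y ≤ D) :
    Wp p d m n ^ p ≤ D ^ p * ∑ x, (m {x} - n {x}) := by
  let c : Measure Z := Measure.sum fun x => min (m {x}) (n {x}) • Measure.dirac x
  have hc : ∀ ρ : Measure Z, (∀ x, min (m {x}) (n {x}) ≤ ρ {x}) → c ≤ ρ := fun ρ hρ => by
    refine Measure.le_iff.2 fun s hs => ?_
    rw [← ρ.sum_smul_dirac, Measure.sum_apply _ hs, Measure.sum_apply _ hs]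
    exact ENNReal.tsum_le_tsum fun x => mul_le_mul_left (hρ x) _
  have hm : ∑ x, m {x} = 1 := by
    rw [← measure_univ (μ := m), ← Finset.coe_univ, sum_measure_singleton]
  refine (Wp_rpow_le_of_common_part hp .of_discrete hself hD (hc m fun x => min_le_left ..)
    (hc n fun x => min_le_right ..)).trans ?_
  gcongr
  calc 1 - c Set.univ = ∑ x, m {x} - ∑ x, min (m {x}) (n {x}) := by simp [c, hm]
    _ ≤ ∑ x, (m {x} - min (m {x}) (n {x})) := by
        rw [tsub_le_iff_right, ← Finset.sum_add_distrib]
        exact Finset.sum_le_sum fun x _ => le_tsub_add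
    _ = ∑ x, (m {x} - n {x}) := by simp only [tsub_min]

theorem Wp_map_simpleFunc_rpow_le [MeasurableSingletonClass Z] (hp : 0 < p)
    (hd : IsMeasurableEDist d) (T : SimpleFunc Z Z) {D : ℝ≥0∞} (hD : ∀ x y, d (T x) (T y) ≤ D) :
    Wp p d (m.map T) (n.map T) ^ p ≤ D ^ p * ∑ y ∈ T.range, (m (T ⁻¹' {y}) - n (T ⁻¹' {y})) := by
  let S : Z → T.range := fun x => ⟨T x, T.mem_range_self x⟩
  have hS : Measurable S := T.measurable.subtype_mk
  have := Measure.isProbabilityMeasure_map (μ := m) hS.aemeasurable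
  have := Measure.isProbabilityMeasure_map (μ := n) hS.aemeasurable
  have hD' : ∀ x y : T.range, d x y ≤ D := by
    rintro ⟨x, hx⟩ ⟨y, hy⟩
    obtain ⟨x, rfl⟩ := SimpleFunc.mem_range.1 hx
    obtain ⟨y, rfl⟩ := SimpleFunc.mem_range.1 hy
    exact hD x y
  have hval : ∀ ρ : Measure Z, ρ.map T = (ρ.map S).map Subtype.val := fun ρ =>
    (Measure.map_map measurable_subtype_coe hS).symm
  have hpre : ∀ (ρ : Measure Z) (y : T.range), ρ.map S {y} = ρ (T ⁻¹' {(y : Z)}) := fun ρ y => by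
    rw [Measure.map_apply hS (measurableSet_singleton y)]
    exact congrArg ρ (Set.ext fun x => Subtype.ext_iff)
  calc Wp p d (m.map T) (n.map T) ^ p
      ≤ Wp p (fun x y : T.range => d x y) (m.map S) (n.map S) ^ p := by
        gcongr
        rw [hval, hval]
        exact Wp_map_le hd.measurable measurable_subtype_coe
    _ ≤ D ^ p * ∑ y, (m.map S {y} - n.map S {y}) :=
        Wp_rpow_le_of_fintype (d := fun x y : T.range => d x y) hp (fun x => hd.self x) hD'
    _ = _ := by
        simp only [hpre]
        rw [Finset.sum_coe_sort T.range fun y => m (T ⁻¹' {y}) - n (T ⁻¹' {y})]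

theorem Wp_le_of_simpleFunc [StandardBorelSpace Z] (hp : 1 ≤ p) (hd : IsMeasurableEDist d)
    (T : SimpleFunc Z Z) {D : ℝ≥0∞} (hD : ∀ x y, d (T x) (T y) ≤ D) :
    Wp p d m n ≤ lpCost p m (fun x => d x (T x)) + lpCost p n (fun x => d x (T x)) +
      (D ^ p * ∑ y ∈ T.range, (m (T ⁻¹' {y}) - n (T ⁻¹' {y}))) ^ (1 / p) := by
  have hp0 : 0 < p := one_pos.trans_le hp
  have := Measure.isProbabilityMeasure_map (μ := m) T.measurable.aemeasurable
  have := Measure.isProbabilityMeasure_map (μ := n) T.measurable.aemeasurable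
  calc Wp p d m n
      ≤ Wp p d m (m.map T) + (Wp p d (m.map T) (n.map T) + Wp p d (n.map T) n) :=
        (Wp_triangle hp hd).trans (by gcongr; exact Wp_triangle hp hd)
    _ = Wp p d m (m.map T) + Wp p d n (n.map T) + Wp p d (m.map T) (n.map T) := by
        rw [Wp_comm hd (n.map T) n]
        ring
    _ ≤ _ := by
        gcongr
        · exact Wp_self_map_le hd.measurable T.measurable
        · exact Wp_self_map_le hd.measurable T.measurable
        · rw [one_div, ENNReal.le_rpow_inv_iff hp0]
          exact Wp_map_simpleFunc_rpow_le hp0 hd T hD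

end CommonPart

/-! ### Measurability and convexity of the Wasserstein distance -/

section WassersteinSpace

variable {B : Type*} [PseudoMetricSpace B] [MeasurableSpace B] {p : ℝ}

/-- The `p`-Wasserstein space `𝒫_p(B)`, as a measurable subspace of `Measure B`. -/
abbrev WassersteinSpace (p : ℝ) (B : Type*) [PseudoMetricSpace B] [MeasurableSpace B] : Type _ :=
  {m : Measure B // MemPp p (edist : B → B → ℝ≥0∞) m}

instance (m : WassersteinSpace p B) : IsProbabilityMeasure m.1 := m.2.1

theorem exists_edist_simpleFunc_le (T : SimpleFunc B B) :
    ∃ D : ℝ≥0∞, D ≠ ∞ ∧ ∀ x y, edist (T x) (T y) ≤ D :=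
  ⟨Metric.ediam (Set.range T), T.finite_range.isBounded.ediam_ne_top, fun x y =>
    Metric.edist_le_ediam_of_mem (Set.mem_range_self x) (Set.mem_range_self y)⟩

variable [BorelSpace B]

theorem MemPp.lpCost_edist_ne_top (hp : 1 ≤ p) {m : Measure B} (hm : MemPp p edist m) (x₀ : B) :
    lpCost p m (edist x₀) ≠ ∞ := by
  have := hm.1
  obtain ⟨x₁, hx₁⟩ := hm.2
  refine ne_top_of_le_ne_top (ENNReal.add_ne_top.2
    ⟨ENNReal.rpow_ne_top_of_nonneg (y := 1 / p) (by positivity) hx₁, edist_ne_top x₁ x₀⟩) ?_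
  calc lpCost p m (edist x₀) ≤ lpCost p m (fun x => edist x₁ x + edist x₁ x₀) :=
        lpCost_mono (by positivity) fun x => (edist_triangle_left x₀ x x₁).trans_eq (add_comm _ _)
    _ ≤ _ := lpCost_add_const_le hp measurable_edist_right.aemeasurable _

theorem memPp_iff (hp : 1 ≤ p) (x₀ : B) {m : Measure B} :
    MemPp p edist m ↔ IsProbabilityMeasure m ∧ lpCost p m (edist x₀) ≠ ∞ := by
  refine ⟨fun hm => ⟨hm.1, hm.lpCost_edist_ne_top hp x₀⟩, fun hm => ⟨hm.1, x₀, ?_⟩⟩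
  rw [← lpCost_rpow (by positivity)]
  exact ENNReal.rpow_ne_top_of_nonneg (by positivity) hm.2

theorem measurableSet_memPp (hp : 1 ≤ p) :
    MeasurableSet {m : Measure B | MemPp p edist m} := by
  rcases isEmpty_or_nonempty B with _ | ⟨⟨x₀⟩⟩
  · convert MeasurableSet.empty
    exact Set.eq_empty_of_forall_notMem fun m hm => hm.2.elim fun x => isEmptyElim x
  simp only [memPp_iff hp x₀]
  exact ProbabilityMeasure.measurableSet_isProbabilityMeasure.inter
    (measurable_lpCost measurable_edist_right (measurableSet_singleton ∞).compl)

variable [SecondCountableTopology B]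

theorem isMeasurableEDist_edist : IsMeasurableEDist (edist : B → B → ℝ≥0∞) :=
  ⟨edist_self, edist_comm, edist_triangle, measurable_edist⟩

theorem lpCost_edist_le_add_Wp (hp : 1 ≤ p) (x₀ : B) (m n : Measure B) :
    lpCost p m (edist x₀) ≤ lpCost p n (edist x₀) + Wp p edist m n :=
  lpCost_le_lpCost_add_Wp hp measurable_edist measurable_edist_right fun x y =>
    (edist_triangle x₀ y x).trans_eq (by rw [edist_comm y x])

theorem memPp_of_Wp_ne_top (hp : 1 ≤ p) {m n : Measure B} [IsProbabilityMeasure m]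
    (hn : MemPp p edist n) (h : Wp p edist m n ≠ ∞) : MemPp p edist m := by
  obtain ⟨x₀, -⟩ := hn.2
  exact (memPp_iff hp x₀).2 ⟨‹_›, ne_top_of_le_ne_top
    (ENNReal.add_ne_top.2 ⟨hn.lpCost_edist_ne_top hp x₀, h⟩) (lpCost_edist_le_add_Wp hp x₀ m n)⟩

instance standardBorelSpace_wassersteinSpace [StandardBorelSpace B] [Fact (1 ≤ p)] :
    StandardBorelSpace (WassersteinSpace p B) := by
  let f : WassersteinSpace p B → ProbabilityMeasure B := fun m => ⟨m.1, m.2.1⟩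
  have hval := MeasurableEmbedding.subtype_coe (measurableSet_memPp (B := B) (Fact.out : 1 ≤ p))
  have hf : MeasurableEmbedding f := by
    refine ⟨fun m n h => Subtype.ext (Subtype.mk.inj h), measurable_subtype_coe.subtype_mk,
      fun s hs => ?_⟩
    have himage : f '' s = (fun m => m.1) ⁻¹' (Subtype.val '' s) :=
      Set.ext fun m => exists_congr fun n => and_congr_right fun _ => Subtype.ext_iff
    exact himage ▸ measurable_subtype_coe (hval.measurableSet_image.2 hs)
  exact standardBorelSpace_of_measurableEmbedding hf

/-- The nearest-point projection onto the first points of a dense sequence, as a measurable map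
with finite range. -/
def nearestPoint (x₀ : B) (n : ℕ) : SimpleFunc B B :=
  SimpleFunc.approxOn id measurable_id Set.univ x₀ (Set.mem_univ x₀) n

theorem tendsto_lpCost_nearestPoint (hp : 1 ≤ p) {m : Measure B} (hm : MemPp p edist m) (x₀ : B) :
    Tendsto (fun n => lpCost p m fun x => edist x (nearestPoint x₀ n x)) atTop (𝓝 0) := by
  have hp0 : 0 < p := by positivity
  have hbound : ∀ n x, edist x (nearestPoint x₀ n x) ≤ edist x₀ x := fun n x =>
    (edist_comm x _).trans_le (SimpleFunc.edist_approxOn_le measurable_id (Set.mem_univ x₀) x n)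
  have hlim : ∀ x, Tendsto (fun n => edist x (nearestPoint x₀ n x)) atTop (𝓝 0) := fun x => by
    have := SimpleFunc.tendsto_approxOn measurable_id (Set.mem_univ x₀) (x := x) (by simp)
    simpa [nearestPoint, edist_comm] using tendsto_iff_edist_tendsto_0.1 this
  have hint : Tendsto (fun n => ∫⁻ x, edist x (nearestPoint x₀ n x) ^ p ∂m) atTop (𝓝 0) := by
    rw [← lintegral_zero (μ := m)]
    refine tendsto_lintegral_of_dominated_convergence (fun x => edist x₀ x ^ p)
      (fun n => (measurable_id.edist (nearestPoint x₀ n).measurable).pow_const p)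
      (fun n => ae_of_all _ fun x => ENNReal.rpow_le_rpow (hbound n x) hp0.le) ?_
      (ae_of_all _ fun x => ?_)
    · rw [← lpCost_rpow hp0]
      exact ENNReal.rpow_ne_top_of_nonneg hp0.le (hm.lpCost_edist_ne_top hp x₀)
    · simpa [hp0] using (hlim x).ennrpow_const p
  simpa [lpCost, hp0] using hint.ennrpow_const (1 / p)

end WassersteinSpace

section MassCell

open scoped NNReal

variable {B : Type*} [PseudoMetricSpace B] [MeasurableSpace B] {p : ℝ} {T : SimpleFunc B B}
  {a η : ℝ≥0} {q : T.range → ℕ}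

/-- The measures which `T` moves by at most `a` and which charge each fibre of `T` with a mass
in a prescribed interval of length `η`. These sets are convex in the strong sense of
`bind_mem_massCell`, unlike Wasserstein balls, whose convexity is what they serve to prove. -/
def massCell (p : ℝ) (T : SimpleFunc B B) (a η : ℝ≥0) (q : T.range → ℕ) : Set (Measure B) :=
  {m | lpCost p m (fun x => edist x (T x)) ≤ a ∧
    ∀ y : T.range, m (T ⁻¹' {(y : B)}) ∈ Set.Icc (q y * η : ℝ≥0∞) ((q y + 1) * η)}

theorem exists_mem_massCell {m : Measure B} [IsProbabilityMeasure m]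
    (hT : lpCost p m (fun x => edist x (T x)) ≤ a) (hη : 0 < η) : ∃ q, m ∈ massCell p T a η q := by
  refine ⟨fun y => ⌊m.real (T ⁻¹' {(y : B)}) / (η : ℝ)⌋₊, hT, fun y => ?_⟩
  set x := m.real (T ⁻¹' {(y : B)})
  have hx : m (T ⁻¹' {(y : B)}) = ENNReal.ofReal x := by simp [x]
  have hη' : (η : ℝ≥0∞) = ENNReal.ofReal (η : ℝ) := by simp
  have hηR : (0 : ℝ) < η := hη
  rw [hx, hη', ← Nat.cast_succ, ← ENNReal.ofReal_natCast, ← ENNReal.ofReal_natCast,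
    ← ENNReal.ofReal_mul (by positivity), ← ENNReal.ofReal_mul (by positivity)]
  constructor
  · exact ENNReal.ofReal_le_ofReal
      ((le_div_iff₀ hηR).1 (Nat.floor_le (div_nonneg measureReal_nonneg hηR.le)))
  · exact ENNReal.ofReal_le_ofReal ((div_le_iff₀ hηR).1 (by
      rw [Nat.cast_succ]; exact (Nat.lt_floor_add_one _).le))

theorem exists_massCell_width (hp : 0 ≤ p) (T : SimpleFunc B B) (ha : 0 < a) :
    ∃ η : ℝ≥0, 0 < η ∧ ∃ D : ℝ≥0∞, (∀ x y, edist (T x) (T y) ≤ D) ∧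
      (T.range.card : ℝ≥0∞) * D ^ p * η ≤ (a : ℝ≥0∞) ^ p := by
  obtain ⟨D, hD, hTD⟩ := exists_edist_simpleFunc_le T
  have hC : (T.range.card : ℝ≥0∞) * D ^ p ≠ ∞ :=
    ENNReal.mul_ne_top (ENNReal.natCast_ne_top _) (ENNReal.rpow_ne_top_of_nonneg hp hD)
  obtain ⟨η, hη, hηC⟩ := ENNReal.exists_nnreal_pos_mul_lt hC
    (ENNReal.rpow_pos (ENNReal.coe_pos.2 ha) ENNReal.coe_ne_top).ne'
  exact ⟨η, hη, D, hTD, by rw [mul_comm]; exact hηC.le⟩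

variable [SecondCountableTopology B] [BorelSpace B]

theorem measurableSet_massCell : MeasurableSet (massCell p T a η q) := by
  refine (measurableSet_le (measurable_lpCost (measurable_id.edist T.measurable))
    measurable_const).inter ?_
  exact measurableSet_setOfPred.2 (Measurable.forall fun y => measurableSet_setOfPred.1
    (Measure.measurable_coe (T.measurableSet_preimage {(y : B)}) measurableSet_Icc))

theorem bind_mem_massCell (hp : 0 < p) {Ω : Type*} [MeasurableSpace Ω] {P : Measure Ω}
    [IsProbabilityMeasure P] {U : Ω → Measure B} (hU : Measurable U)
    (hmem : ∀ᵐ ω ∂P, U ω ∈ massCell p T a η q) : P.bind U ∈ massCell p T a η q := by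
  have hdist : Measurable fun x => edist x (T x) := measurable_id.edist T.measurable
  refine ⟨?_, fun y => ?_⟩
  · rw [lpCost_bind hp hdist hU.aemeasurable]
    refine (lpCost_mono_ae hp (hmem.mono fun ω hω => hω.1)).trans_eq (lpCost_const hp _)
  · rw [Measure.bind_apply (T.measurableSet_preimage _) hU.aemeasurable]
    constructor
    · simpa using lintegral_mono_ae (hmem.mono fun ω hω => (hω.2 y).1)
    · simpa using lintegral_mono_ae (hmem.mono fun ω hω => (hω.2 y).2)

theorem Wp_le_of_mem_massCell [StandardBorelSpace B] (hp : 1 ≤ p) {D : ℝ≥0∞}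
    (hD : ∀ x y, edist (T x) (T y) ≤ D) (hη : (T.range.card : ℝ≥0∞) * D ^ p * η ≤ (a : ℝ≥0∞) ^ p)
    {m n : Measure B} [IsProbabilityMeasure m] [IsProbabilityMeasure n]
    (hm : m ∈ massCell p T a η q) (hn : n ∈ massCell p T a η q) :
    Wp p edist m n ≤ 3 * a := by
  have hp0 : 0 < p := by positivity
  have hmass : ∀ y ∈ T.range, m (T ⁻¹' {y}) - n (T ⁻¹' {y}) ≤ η := fun y hy => by
    rw [tsub_le_iff_left]
    calc m (T ⁻¹' {y}) ≤ (q ⟨y, hy⟩ + 1) * η := (hm.2 ⟨y, hy⟩).2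
      _ = q ⟨y, hy⟩ * η + η := by rw [add_mul, one_mul]
      _ ≤ n (T ⁻¹' {y}) + η := by gcongr; exact (hn.2 ⟨y, hy⟩).1
  calc Wp p edist m n
      ≤ a + a + (D ^ p * ∑ y ∈ T.range, (m (T ⁻¹' {y}) - n (T ⁻¹' {y}))) ^ (1 / p) := by
        refine (Wp_le_of_simpleFunc hp isMeasurableEDist_edist T hD).trans ?_
        gcongr
        exacts [hm.1, hn.1]
    _ ≤ a + a + ((a : ℝ≥0∞) ^ p) ^ (1 / p) := by
        gcongr
        refine le_trans ?_ hη
        rw [mul_comm (T.range.card : ℝ≥0∞), mul_assoc]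
        gcongr
        simpa using Finset.sum_le_card_nsmul _ _ _ hmass
    _ = 3 * a := by
        rw [one_div, ENNReal.rpow_rpow_inv hp0.ne']
        ring

end MassCell

section WassersteinConvexity

open scoped NNReal

variable {B : Type*} [PseudoMetricSpace B] [MeasurableSpace B] {p : ℝ}

instance nonempty_wassersteinSpace [MeasurableSingletonClass B] [Nonempty B] [Fact (1 ≤ p)] :
    Nonempty (WassersteinSpace p B) :=
  ‹Nonempty B›.map fun x₀ => ⟨Measure.dirac x₀, inferInstance, x₀, by
    simp [one_pos.trans_le (Fact.out : 1 ≤ p)]⟩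

variable [BorelSpace B] [StandardBorelSpace B]

theorem exists_measurable_retract_wassersteinSpace [Nonempty B] (hp : 1 ≤ p) :
    ∃ r : Measure B → WassersteinSpace p B, Measurable r ∧ ∀ m : WassersteinSpace p B, r m.1 = m :=
  have : Fact (1 ≤ p) := ⟨hp⟩
  have ⟨r, hr, hrm⟩ := (MeasurableEmbedding.subtype_coe
    (measurableSet_memPp hp)).exists_measurable_extend measurable_id
      fun _ => nonempty_wassersteinSpace (p := p) (B := B)
  ⟨r, hr, congrFun hrm⟩

variable [SecondCountableTopology B]

theorem Wp_edist_triangle₃ (hp : 1 ≤ p) (m m' n' n : Measure B) [IsProbabilityMeasure m]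
    [IsProbabilityMeasure m'] [IsProbabilityMeasure n'] :
    Wp p edist m n ≤ Wp p edist m m' + Wp p edist m' n' + Wp p edist n' n := by
  rw [add_assoc]
  exact (Wp_triangle hp isMeasurableEDist_edist (ν := m')).trans
    (add_le_add_right (Wp_triangle hp isMeasurableEDist_edist) _)

/-- The labels come from countably many `massCell`s, so a mixture of measures with a common label
stays in their cell. -/
theorem exists_measurable_label [Nonempty B] (hp : 1 ≤ p) {ε : ℝ≥0} (hε : 0 < ε) :
    ∃ k : WassersteinSpace p B → ℕ, Measurable k ∧
      ∀ (Q : Measure (WassersteinSpace p B)) [IsProbabilityMeasure Q] (m : WassersteinSpace p B),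
        (∀ᵐ n ∂Q, k n = k m) → Wp p edist m.1 (Q.bind Subtype.val) ≤ 3 * ε := by
  classical
  let x₀ := Classical.arbitrary B
  have hp0 : 0 < p := by positivity
  choose η hη D hD hηD using fun n => exists_massCell_width hp0.le (nearestPoint x₀ n) hε
  obtain ⟨s, hs⟩ := exists_surjective_nat (Σ n, (nearestPoint x₀ n).range → ℕ)
  let cell : ℕ → Set (Measure B) := fun i =>
    massCell p (nearestPoint x₀ (s i).1) ε (η (s i).1) (s i).2
  have hcell : ∀ m : WassersteinSpace p B, ∃ i, m.1 ∈ cell i := fun m => by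
    obtain ⟨n, hn⟩ := ((tendsto_lpCost_nearestPoint hp m.2 x₀).eventually_le_const
      (ENNReal.coe_pos.2 hε)).exists
    obtain ⟨q, hq⟩ := exists_mem_massCell hn (hη n)
    obtain ⟨i, hi⟩ := hs ⟨n, q⟩
    exact ⟨i, show m.1 ∈ massCell _ _ _ _ _ by rw [hi]; exact hq⟩
  refine ⟨fun m => Nat.find (hcell m), measurable_find hcell fun i =>
    measurable_subtype_coe measurableSet_massCell, fun Q _ m hQ => ?_⟩
  have hmem : ∀ᵐ n ∂Q, n.1 ∈ cell (Nat.find (hcell m)) :=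
    hQ.mono fun n (hn : Nat.find _ = Nat.find _) => hn ▸ Nat.find_spec (hcell n)
  have hprob : IsProbabilityMeasure (Q.bind Subtype.val) :=
    isProbabilityMeasure_bind measurable_subtype_coe.aemeasurable (ae_of_all _ fun n => n.2.1)
  exact Wp_le_of_mem_massCell hp (hD _) (hηD _) (Nat.find_spec (hcell m))
    (bind_mem_massCell hp0 measurable_subtype_coe hmem)

theorem measurable_Wp_wassersteinSpace [Nonempty B] (hp : 1 ≤ p) :
    Measurable fun z : WassersteinSpace p B × WassersteinSpace p B => Wp p edist z.1.1 z.2.1 := by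
  have : Fact (1 ≤ p) := ⟨hp⟩
  obtain ⟨ε, -, hε, hε_lim⟩ := exists_seq_strictAnti_tendsto (0 : ℝ≥0)
  choose k hk hkε using fun j => exists_measurable_label (B := B) hp (hε j)
  let rep : ℕ → WassersteinSpace p B → WassersteinSpace p B :=
    fun j m => Function.invFun (k j) (k j m)
  have hrep : ∀ j m, Wp p edist m.1 (rep j m).1 ≤ 3 * ε j := fun j m => by
    have hlabel : k j (rep j m) = k j m := Function.invFun_eq ⟨m, rfl⟩
    simpa [Measure.dirac_bind measurable_subtype_coe] using
      hkε j (Measure.dirac (rep j m)) m (by simpa using hlabel)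
  have hrep' : ∀ j m, Wp p edist (rep j m).1 m.1 ≤ 3 * ε j := fun j m =>
    (Wp_comm isMeasurableEDist_edist _ _).trans_le (hrep j m)
  let W : ℕ → WassersteinSpace p B × WassersteinSpace p B → ℝ≥0∞ := fun j z =>
    3 * ε j + Wp p edist (rep j z.1).1 (rep j z.2).1 + 3 * ε j
  have hW : ∀ j, Measurable (W j) := fun j =>
    (((Measurable.of_discrete (f := fun i : ℕ × ℕ =>
      Wp p edist (Function.invFun (k j) i.1).1 (Function.invFun (k j) i.2).1)).comp
        ((hk j).prodMap (hk j))).const_add _).add_const _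
  have hle : ∀ j z, Wp p edist z.1.1 z.2.1 ≤ W j z := fun j z =>
    (Wp_edist_triangle₃ hp z.1.1 (rep j z.1) (rep j z.2) z.2).trans
      (add_le_add (add_le_add_left (hrep j _) _) (hrep' j _))
  have hge : ∀ j z, W j z ≤ Wp p edist z.1.1 z.2.1 + 12 * ε j := fun j z => by
    calc W j z ≤ 3 * ε j + (3 * ε j + Wp p edist z.1.1 z.2.1 + 3 * ε j) + 3 * ε j := by
          dsimp only [W]
          gcongr
          refine (Wp_edist_triangle₃ hp (rep j z.1).1 z.1 z.2 (rep j z.2)).trans ?_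
          gcongr
          exacts [hrep' j _, hrep j _]
      _ = _ := by ring
  refine measurable_of_tendsto_metrizable hW (tendsto_pi_nhds.2 fun z => ?_)
  have hlim : Tendsto (fun j => Wp p edist z.1.1 z.2.1 + 12 * ε j) atTop
      (𝓝 (Wp p edist z.1.1 z.2.1)) := by
    simpa using (ENNReal.Tendsto.const_mul (ENNReal.tendsto_coe.2 hε_lim)
      (Or.inr ENNReal.ofNat_ne_top)).const_add (Wp p edist z.1.1 z.2.1)
  exact tendsto_of_tendsto_of_tendsto_of_le_of_le tendsto_const_nhds hlim
    (fun j => hle j z) fun j => hge j z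

theorem measurable_Wp [Nonempty B] (hp : 1 ≤ p) {Ω : Type*} [MeasurableSpace Ω]
    {U : Ω → Measure B} {V : Ω → WassersteinSpace p B} (hU : Measurable U) (hV : Measurable V)
    (hprob : ∀ ω, IsProbabilityMeasure (U ω)) :
    Measurable fun ω => Wp p edist (U ω) (V ω).1 := by
  classical
  obtain ⟨r, hr, hrm⟩ := exists_measurable_retract_wassersteinSpace (B := B) hp
  have heq : (fun ω => Wp p edist (U ω) (V ω).1) =
      fun ω => if MemPp p edist (U ω) then Wp p edist (r (U ω)).1 (V ω).1 else ∞ := by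
    funext ω
    split_ifs with h
    · rw [hrm ⟨U ω, h⟩]
    · exact not_not.1 fun hne => h (memPp_of_Wp_ne_top hp (V ω).2 hne)
  have hS : MeasurableSet (U ⁻¹' {m | MemPp p edist m}) := hU (measurableSet_memPp hp)
  have hW := (measurable_Wp_wassersteinSpace hp).comp ((hr.comp hU).prodMk hV)
  rw [heq]
  exact Measurable.ite hS hW measurable_const

section Jensen

variable {Ω : Type*} [MeasurableSpace Ω] [StandardBorelSpace Ω] {P : Measure Ω}
  [IsProbabilityMeasure P]

theorem exists_mixture_of_countable {K : Type*} [Countable K] [MeasurableSpace K]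
    [DiscreteMeasurableSpace K] {k : Ω → K} (hk : Measurable k) :
    ∃ κ : Kernel K Ω, IsMarkovKernel κ ∧ (P.map k).bind κ = P ∧
      ∀ᵐ i ∂P.map k, ∀ᵐ ω ∂κ i, k ω = i := by
  have := nonempty_of_isProbabilityMeasure P
  have hset : MeasurableSet {z : K × Ω | k z.2 = z.1} :=
    measurableSet_eq_fun (hk.comp measurable_snd) measurable_fst
  refine ⟨condDistrib id k P, inferInstance, ?_, Measure.ae_ae_of_ae_compProd
    (p := fun z : K × Ω => k z.2 = z.1) ?_⟩
  · rw [condDistrib_comp_map hk.aemeasurable aemeasurable_id, Measure.map_id]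
  · rw [compProd_map_condDistrib aemeasurable_id,
      ae_map_iff (hk.prodMk measurable_id).aemeasurable hset]
    exact ae_of_all _ fun ω => rfl

theorem exists_mixture_Wp_le [Nonempty B] (hp : 1 ≤ p) {U V : Ω → WassersteinSpace p B}
    (hU : Measurable U) (hV : Measurable V) {ε : ℝ≥0} (hε : 0 < ε) :
    ∃ (l : Ω → ℕ × ℕ) (κ : Kernel (ℕ × ℕ) Ω), Measurable l ∧ IsMarkovKernel κ ∧
      (P.map l).bind κ = P ∧ ∀ᵐ ω ∂P,
        Wp p edist (U ω).1 ((κ (l ω)).bind fun ω' => (U ω').1) ≤ 3 * ε ∧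
        Wp p edist (V ω).1 ((κ (l ω)).bind fun ω' => (V ω').1) ≤ 3 * ε := by
  obtain ⟨k, hk, hkε⟩ := exists_measurable_label (B := B) hp hε
  let l : Ω → ℕ × ℕ := fun ω => (k (U ω), k (V ω))
  have hl : Measurable l := (hk.comp hU).prodMk (hk.comp hV)
  obtain ⟨κ, hκ_markov, hκP, hκ⟩ := exists_mixture_of_countable (P := P) hl
  refine ⟨l, κ, hl, hκ_markov, hκP, ?_⟩
  have hnear : ∀ T : Ω → WassersteinSpace p B, Measurable T → ∀ ω,
      (∀ᵐ ω' ∂κ (l ω), k (T ω') = k (T ω)) →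
      Wp p edist (T ω).1 ((κ (l ω)).bind fun ω' => (T ω').1) ≤ 3 * ε := fun T hT ω hω => by
    have := Measure.isProbabilityMeasure_map (μ := κ (l ω)) hT.aemeasurable
    have hlabel : ∀ᵐ n ∂(κ (l ω)).map T, k n = k (T ω) :=
      (ae_map_iff hT.aemeasurable (measurableSet_eq_fun hk measurable_const)).2 hω
    have hbind : ((κ (l ω)).map T).bind Subtype.val = (κ (l ω)).bind fun ω' => (T ω').1 :=
      congrArg Measure.join (Measure.map_map measurable_subtype_coe hT)
    exact hbind ▸ hkε _ (T ω) hlabel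
  filter_upwards [ae_of_ae_map hl.aemeasurable hκ] with ω hω
  exact ⟨hnear U hU ω (hω.mono fun ω' h => (Prod.mk.inj h).1),
    hnear V hV ω (hω.mono fun ω' h => (Prod.mk.inj h).2)⟩

theorem Wp_bind_le_of_wassersteinSpace [Nonempty B] (hp : 1 ≤ p)
    {U V : Ω → WassersteinSpace p B} (hU : Measurable U) (hV : Measurable V) :
    Wp p edist (P.bind fun ω => (U ω).1) (P.bind fun ω => (V ω).1) ≤
      lpCost p P fun ω => Wp p edist (U ω).1 (V ω).1 := by
  have hp0 : 0 < p := by positivity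
  refine ENNReal.le_of_forall_pos_le_add fun ε hε _ => ?_
  obtain ⟨l, κ, hl, _, hκP, hκ⟩ :=
    exists_mixture_Wp_le (P := P) hp hU hV (ε := ε / 6) (by positivity)
  have hprob : ∀ T : Ω → WassersteinSpace p B, Measurable T → ∀ i,
      IsProbabilityMeasure ((κ i).bind fun ω => (T ω).1) := fun T hT i =>
    isProbabilityMeasure_bind (measurable_subtype_coe.comp hT).aemeasurable
      (ae_of_all _ fun ω => (T ω).2.1)
  have hmix : ∀ T : Ω → WassersteinSpace p B, Measurable T →
      P.bind (fun ω => (T ω).1) = (P.map l).bind fun i => (κ i).bind fun ω => (T ω).1 :=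
    fun T hT => by
      conv_lhs => rw [← hκP]
      exact Measure.bind_bind κ.measurable.aemeasurable
        (measurable_subtype_coe.comp hT).aemeasurable
  have := Measure.isProbabilityMeasure_map (μ := P) hl.aemeasurable
  have hUV := (measurable_Wp_wassersteinSpace hp).comp (hU.prodMk hV)
  rw [hmix U hU, hmix V hV]
  refine (Wp_bind_le_of_discrete hp0 measurable_edist (hprob U hU) (hprob V hV)).trans ?_
  rw [lpCost_map Measurable.of_discrete hl]
  refine le_trans ?_ (lpCost_add_const_le hp hUV.aemeasurable ε)
  refine lpCost_mono_ae hp0 (hκ.mono fun ω hω => ?_)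
  have := hprob U hU (l ω)
  have hε6 : (3 * (ε / 6 : ℝ≥0) + 3 * (ε / 6 : ℝ≥0) : ℝ≥0∞) = ε := by
    exact_mod_cast (by ring : 3 * (ε / 6) + 3 * (ε / 6) = ε)
  calc Wp p edist ((κ (l ω)).bind fun ω => (U ω).1) ((κ (l ω)).bind fun ω => (V ω).1)
      ≤ Wp p edist ((κ (l ω)).bind fun ω => (U ω).1) (U ω).1 + Wp p edist (U ω).1 (V ω).1 +
          Wp p edist (V ω).1 ((κ (l ω)).bind fun ω => (V ω).1) := Wp_edist_triangle₃ hp _ _ _ _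
    _ ≤ 3 * (ε / 6 : ℝ≥0) + Wp p edist (U ω).1 (V ω).1 + 3 * (ε / 6 : ℝ≥0) := by
        gcongr
        exacts [(Wp_comm isMeasurableEDist_edist _ _).trans_le hω.1, hω.2]
    _ = Wp p edist (U ω).1 (V ω).1 + ε := by rw [add_right_comm, hε6, add_comm]

theorem Wp_bind_le [Nonempty B] (hp : 1 ≤ p)
    {U : Ω → Measure B} {V : Ω → WassersteinSpace p B} (hU : Measurable U) (hV : Measurable V)
    (hprob : ∀ ω, IsProbabilityMeasure (U ω)) :
    Wp p edist (P.bind U) (P.bind fun ω => (V ω).1) ≤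
      lpCost p P fun ω => Wp p edist (U ω) (V ω).1 := by
  obtain ⟨r, hr, hrm⟩ := exists_measurable_retract_wassersteinSpace (B := B) hp
  have hp0 : 0 < p := by positivity
  rcases eq_or_ne (lpCost p P fun ω => Wp p edist (U ω) (V ω).1) ∞ with h | h
  · exact h ▸ le_top
  have hfin : ∫⁻ ω, Wp p edist (U ω) (V ω).1 ^ p ∂P ≠ ∞ := by
    rw [← lpCost_rpow hp0]
    exact ENNReal.rpow_ne_top_of_nonneg hp0.le h
  have hUr : ∀ᵐ ω ∂P, (r (U ω)).1 = U ω := by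
    filter_upwards [ae_lt_top ((measurable_Wp hp hU hV hprob).pow_const p) hfin] with ω hω
    have hmem : MemPp p edist (U ω) := memPp_of_Wp_ne_top hp (V ω).2 fun htop => by
      simp [htop, hp0] at hω
    exact congrArg Subtype.val (hrm ⟨U ω, hmem⟩)
  calc Wp p edist (P.bind U) (P.bind fun ω => (V ω).1)
      = Wp p edist (P.bind fun ω => (r (U ω)).1) (P.bind fun ω => (V ω).1) := by
        rw [Measure.bind_congr_right hUr]
    _ ≤ lpCost p P fun ω => Wp p edist (r (U ω)).1 (V ω).1 :=
        Wp_bind_le_of_wassersteinSpace hp (hr.comp hU) hV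
    _ ≤ lpCost p P fun ω => Wp p edist (U ω) (V ω).1 :=
        lpCost_mono_ae hp0 (hUr.mono fun ω hω => (congrArg (Wp p edist · _) hω).le)

end Jensen

end WassersteinConvexity

/-! ### Causal transport of random measures -/

section Barycenter

variable {A B : Type*} [MeasurableSpace A] [PseudoMetricSpace B] [MeasurableSpace B] {p : ℝ}
  {Q : Measure (A × WassersteinSpace p B)}

/-- The barycenter `∫ m dQ(x, m)` of the second coordinate under `Q`. If `Q` is the conditional law
of `(X₁, X̂₂)` given `Y⃗ = y`, this is the value at `y` of the conditional expectation of `X̂₂`. -/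
def barycenter (Q : Measure (A × WassersteinSpace p B)) : Measure B :=
  Q.bind fun x => x.2.1

theorem measurable_barycenter :
    Measurable (barycenter : Measure (A × WassersteinSpace p B) → Measure B) :=
  Measure.measurable_bind' (measurable_subtype_coe.comp measurable_snd)

instance [IsProbabilityMeasure Q] : IsProbabilityMeasure (barycenter Q) :=
  isProbabilityMeasure_bind (measurable_subtype_coe.comp measurable_snd).aemeasurable
    (ae_of_all _ fun x => x.2.2.1)

theorem lintegral_barycenter {f : B → ℝ≥0∞} (hf : Measurable f) :
    ∫⁻ b, f b ∂barycenter Q = ∫⁻ x, ∫⁻ b, f b ∂x.2.1 ∂Q :=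
  Measure.lintegral_bind (measurable_subtype_coe.comp measurable_snd).aemeasurable hf.aemeasurable

theorem barycenter_apply {S : Set B} (hS : MeasurableSet S) :
    barycenter Q S = ∫⁻ x, x.2.1 S ∂Q :=
  Measure.bind_apply hS (measurable_subtype_coe.comp measurable_snd).aemeasurable

theorem barycenter_bind {Y : Type*} [MeasurableSpace Y] {P : Measure Y}
    {κ : Y → Measure (A × WassersteinSpace p B)} (hκ : Measurable κ) :
    barycenter (P.bind κ) = P.bind fun y => barycenter (κ y) :=
  Measure.bind_bind hκ.aemeasurable (measurable_subtype_coe.comp measurable_snd).aemeasurable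

end Barycenter

section CausalTransport

variable {A B : Type*} [MeasurableSpace A] [PseudoMetricSpace B] [MeasurableSpace B] {p : ℝ}
  {dA : A → A → ℝ≥0∞} {μ ν ρ Q : Measure (A × WassersteinSpace p B)}

/-- The `ℓ^p` distance on `A × 𝒫_p(B)`, that is, `liftDist` read on the subtype. -/
def liftedEDist (p : ℝ) (dA : A → A → ℝ≥0∞) (x y : A × WassersteinSpace p B) : ℝ≥0∞ :=
  lpAdd p (dA x.1 y.1) (Wp p edist x.2.1 y.2.1)

/-- The causal cost of spreading the unit mass at `y` according to `Q`: the first coordinate is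
transported, the second is only compared with `y` after averaging. -/
def causalCost (p : ℝ) (dA : A → A → ℝ≥0∞) (Q : Measure (A × WassersteinSpace p B))
    (y : A × WassersteinSpace p B) : ℝ≥0∞ :=
  lpAdd p (lpCost p Q fun x => dA x.1 y.1) (Wp p edist (barycenter Q) y.2.1)

/-- The causal Wasserstein distance on `𝒫(A × 𝒫_p(B))`. A coupling of `μ` and `ν` is encoded by
its disintegration `κ` with respect to `ν`, the conditional law of the first coordinate given the
second. -/
def causalWp (p : ℝ) (dA : A → A → ℝ≥0∞) (μ ν : Measure (A × WassersteinSpace p B)) : ℝ≥0∞ :=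
  ⨅ (κ : Kernel (A × WassersteinSpace p B) (A × WassersteinSpace p B)) (_ : IsMarkovKernel κ)
    (_ : κ ∘ₘ ν = μ), lpCost p ν fun y => causalCost p dA (κ y) y

theorem causalWp_lt_iff {r : ℝ≥0∞} : causalWp p dA μ ν < r ↔
    ∃ κ : Kernel (A × WassersteinSpace p B) (A × WassersteinSpace p B), IsMarkovKernel κ ∧
      κ ∘ₘ ν = μ ∧ lpCost p ν (fun y => causalCost p dA (κ y) y) < r := by
  simp only [causalWp, iInf_lt_iff, exists_prop]

theorem causalWp_le_lpCost {κ : Kernel (A × WassersteinSpace p B) (A × WassersteinSpace p B)}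
    [hκ : IsMarkovKernel κ] (hμ : κ ∘ₘ ν = μ) :
    causalWp p dA μ ν ≤ lpCost p ν fun y => causalCost p dA (κ y) y :=
  iInf_le_of_le κ (iInf_le_of_le hκ (iInf_le _ hμ))

variable [BorelSpace B] [SecondCountableTopology B] [StandardBorelSpace B] [Nonempty B]

theorem isMeasurableEDist_liftedEDist (hp : 1 ≤ p) (hdA : IsMeasurableEDist dA) :
    IsMeasurableEDist (liftedEDist (B := B) p dA) := by
  have hp0 : 0 < p := by positivity
  have hB : IsMeasurableEDist (edist : B → B → ℝ≥0∞) := isMeasurableEDist_edist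
  refine ⟨fun x => ?_, fun x y => ?_, fun x y z => ?_, ?_⟩
  · simp only [liftedEDist, hdA.self, Wp_self hp0 hB, lpAdd_zero_left hp0]
  · rw [liftedEDist, liftedEDist, hdA.comm, Wp_comm hB]
  · exact (lpAdd_mono hp0 (hdA.triangle _ y.1 _) (Wp_triangle hp hB (ν := y.2.1))).trans
      (lpAdd_add_add_le hp ..)
  · exact measurable_lpAdd (hdA.measurable_comp (by fun_prop) (by fun_prop)) (measurable_Wp hp
      (measurable_subtype_coe.comp (measurable_snd.comp measurable_fst))
      (measurable_snd.comp measurable_snd) fun z => z.1.2.2.1)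

theorem causalCost_le_lpCost [StandardBorelSpace A] (hp : 1 ≤ p) [IsProbabilityMeasure Q]
    (hdA : IsMeasurableEDist dA) (y : A × WassersteinSpace p B) :
    causalCost p dA Q y ≤ lpCost p Q fun x => liftedEDist p dA x y := by
  have := Fact.mk hp
  have hp0 : 0 < p := by positivity
  have hjensen : Wp p edist (barycenter Q) y.2.1 ≤ lpCost p Q fun x => Wp p edist x.2.1 y.2.1 := by
    have h := Wp_bind_le (P := Q) hp (U := fun x => x.2.1) (V := fun _ => y.2)
      (measurable_subtype_coe.comp measurable_snd) measurable_const fun x => x.2.2.1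
    rwa [Measure.bind_const, measure_univ, one_smul] at h
  calc causalCost p dA Q y
      ≤ lpAdd p (lpCost p Q fun x => dA x.1 y.1) (lpCost p Q fun x => Wp p edist x.2.1 y.2.1) :=
        lpAdd_mono hp0 le_rfl hjensen
    _ = lpCost p Q fun x => liftedEDist p dA x y :=
        (lpCost_lpAdd hp0 (hdA.measurable_comp measurable_fst measurable_const)).symm

theorem measurable_causalCost (hp : 1 ≤ p) (hdA : IsMeasurableEDist dA)
    (κ : Kernel (A × WassersteinSpace p B) (A × WassersteinSpace p B)) [IsMarkovKernel κ] :
    Measurable fun z : (A × WassersteinSpace p B) × (A × WassersteinSpace p B) =>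
      causalCost p dA (κ z.1) z.2 := by
  have hcost : Measurable fun z : (A × WassersteinSpace p B) × (A × WassersteinSpace p B) =>
      lpCost p (κ z.1) fun x => dA x.1 z.2.1 := by
    have h := (hdA.measurable_comp (f := fun w : ((A × WassersteinSpace p B) ×
      (A × WassersteinSpace p B)) × (A × WassersteinSpace p B) => w.2.1) (g := fun w => w.1.2.1)
      (by fun_prop) (by fun_prop)).pow_const p
    exact (h.lintegral_kernel_prod_right' (κ := κ.comap Prod.fst measurable_fst)).pow_const _
  exact measurable_lpAdd hcost (measurable_Wp hp (measurable_barycenter.comp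
    (κ.measurable.comp measurable_fst)) (measurable_snd.comp measurable_snd) fun _ => inferInstance)

theorem causalCost_bind_le [StandardBorelSpace A] (hp : 1 ≤ p) (hdA : IsMeasurableEDist dA)
    {P : Measure (A × WassersteinSpace p B)} [IsProbabilityMeasure P]
    (κ : Kernel (A × WassersteinSpace p B) (A × WassersteinSpace p B)) [IsMarkovKernel κ]
    (z : A × WassersteinSpace p B) :
    causalCost p dA (P.bind κ) z ≤
      lpCost p P (fun y => causalCost p dA (κ y) y) + causalCost p dA P z := by
  have := Fact.mk hp
  have hp0 : 0 < p := by positivity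
  let c : A × WassersteinSpace p B → ℝ≥0∞ := fun y => lpCost p (κ y) fun x => dA x.1 y.1
  have hdz : Measurable fun y : A × WassersteinSpace p B => dA y.1 z.1 :=
    hdA.measurable_comp measurable_fst measurable_const
  have hc : Measurable c := by
    have h := (hdA.measurable_comp (f := fun w : (A × WassersteinSpace p B) ×
      (A × WassersteinSpace p B) => w.2.1) (g := fun w => w.1.1)
      (by fun_prop) (by fun_prop)).pow_const p
    exact (h.lintegral_kernel_prod_right' (κ := κ)).pow_const _
  have hfst : lpCost p (P.bind κ) (fun x => dA x.1 z.1) ≤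
      lpCost p P c + lpCost p P fun y => dA y.1 z.1 := by
    rw [lpCost_bind hp0 hdz κ.measurable.aemeasurable]
    refine (lpCost_mono hp0 fun y => ?_).trans
      (lpCost_add_le hp hc.aemeasurable hdz.aemeasurable)
    exact (lpCost_mono hp0 fun x : A × WassersteinSpace p B =>
      hdA.triangle x.1 y.1 z.1).trans (lpCost_add_const_le hp
      (hdA.measurable_comp measurable_fst measurable_const).aemeasurable _)
  have hsnd : Wp p edist (barycenter (P.bind κ)) z.2.1 ≤
      lpCost p P (fun y => Wp p edist (barycenter (κ y)) y.2.1) +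
        Wp p edist (barycenter P) z.2.1 := by
    have : IsProbabilityMeasure (P.bind κ) := inferInstance
    refine (Wp_triangle hp isMeasurableEDist_edist (ν := barycenter P)).trans
      (add_le_add_left ?_ _)
    rw [barycenter_bind κ.measurable]
    exact Wp_bind_le hp (measurable_barycenter.comp κ.measurable) measurable_snd
      fun _ => inferInstance
  calc causalCost p dA (P.bind κ) z ≤ lpAdd p (_ + _) (_ + _) := lpAdd_mono hp0 hfst hsnd
    _ ≤ _ := lpAdd_add_add_le hp ..
    _ = _ := congrArg (· + _) (lpCost_lpAdd hp0 hc).symm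

theorem causalWp_triangle [StandardBorelSpace A] (hp : 1 ≤ p) (hdA : IsMeasurableEDist dA) :
    causalWp p dA μ ρ ≤ causalWp p dA μ ν + causalWp p dA ν ρ := by
  have hp0 : 0 < p := by positivity
  unfold causalWp
  simp only [ENNReal.iInf_add, ENNReal.add_iInf]
  refine le_iInf fun κ₂ => le_iInf fun _ => le_iInf fun hν => le_iInf fun κ₁ => le_iInf fun _ =>
    le_iInf fun hμ => ?_
  let c₁ := fun y => causalCost p dA (κ₁ y) y
  let c₂ := fun z => causalCost p dA (κ₂ z) z
  have hc₁ : Measurable c₁ :=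
    (measurable_causalCost hp hdA κ₁).comp (measurable_id.prodMk measurable_id)
  have hc₂ : Measurable c₂ :=
    (measurable_causalCost hp hdA κ₂).comp (measurable_id.prodMk measurable_id)
  have hcomp : (κ₁ ∘ₖ κ₂) ∘ₘ ρ = μ := by rw [← Measure.comp_assoc, hν, hμ]
  calc causalWp p dA μ ρ
      ≤ lpCost p ρ fun z => causalCost p dA ((κ₁ ∘ₖ κ₂) z) z := causalWp_le_lpCost hcomp
    _ ≤ lpCost p ρ fun z => lpCost p (κ₂ z) c₁ + c₂ z := lpCost_mono hp0 fun z => by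
        rw [Kernel.comp_apply]
        exact causalCost_bind_le hp hdA κ₁ z
    _ ≤ lpCost p ρ (fun z => lpCost p (κ₂ z) c₁) + lpCost p ρ c₂ :=
        lpCost_add_le hp ((measurable_lpCost hc₁).comp κ₂.measurable).aemeasurable
          hc₂.aemeasurable
    _ = lpCost p ν c₁ + lpCost p ρ c₂ := by
        rw [← lpCost_bind hp0 hc₁ κ₂.measurable.aemeasurable, hν]

theorem causalWp_le_Wp [StandardBorelSpace A] (hp : 1 ≤ p) (hdA : IsMeasurableEDist dA)
    [IsProbabilityMeasure μ] [IsProbabilityMeasure ν] :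
    causalWp p dA μ ν ≤ Wp p (liftedEDist p dA) μ ν := by
  have hp0 : 0 < p := by positivity
  have := Fact.mk hp
  refine le_iInf₂ fun γ hγ => ?_
  obtain ⟨κ, _, rfl⟩ := exists_map_swap_compProd_eq hγ
  have hd := (isMeasurableEDist_liftedEDist (B := B) hp hdA).measurable
  calc causalWp p dA μ ν
      ≤ lpCost p ν fun y => causalCost p dA (κ y) y :=
        causalWp_le_lpCost (map_swap_compProd_mem_Cpl_iff.1 hγ)
    _ ≤ lpCost p ν fun y => lpCost p (κ y) fun x => liftedEDist p dA x y :=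
        lpCost_mono hp0 fun y => causalCost_le_lpCost hp hdA y
    _ = lpCost p (ν ⊗ₘ κ) ((fun z => liftedEDist p dA z.1 z.2) ∘ Prod.swap) :=
        (lpCost_compProd hp0 (hd.comp measurable_swap)).symm
    _ = lpCost p ((ν ⊗ₘ κ).map Prod.swap) fun z => liftedEDist p dA z.1 z.2 :=
        (lpCost_map hd measurable_swap).symm

end CausalTransport

section LiftIncl

variable {A B : Type*} [MeasurableSpace A] [PseudoMetricSpace B] [MeasurableSpace B] {p : ℝ}
  {dA : A → A → ℝ≥0∞} {μ ν : Measure (A × WassersteinSpace p B)}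

/-- The inclusion of `A × 𝒫_p(B)` into `A × Measure B`, the carrier on which `AWbar` and `CWbar` are
defined. -/
def liftIncl (x : A × WassersteinSpace p B) : A × Measure B :=
  (x.1, x.2.1)

/-- The law on `(A × Measure B)²` of `(x, y)` for `y ∼ ν` and `x ∼ κ y`. -/
def liftCoupling (ν : Measure (A × WassersteinSpace p B))
    (κ : Kernel (A × WassersteinSpace p B) (A × WassersteinSpace p B)) :
    Measure ((A × Measure B) × (A × Measure B)) :=
  ((ν ⊗ₘ κ).map Prod.swap).map (Prod.map liftIncl liftIncl)

variable [BorelSpace B]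

theorem measurableEmbedding_liftIncl (hp : 1 ≤ p) :
    MeasurableEmbedding (liftIncl : A × WassersteinSpace p B → A × Measure B) :=
  MeasurableEmbedding.id.prodMap (MeasurableEmbedding.subtype_coe (measurableSet_memPp hp))

theorem exists_map_liftIncl_eq (hp : 1 ≤ p) {μ : Measure (A × Measure B)}
    (hμ : MemPpLift p dA edist μ) : ∃ μ' : Measure (A × WassersteinSpace p B),
      IsProbabilityMeasure μ' ∧ (∃ z₀, lpCost p μ' (liftedEDist p dA z₀) ≠ ∞) ∧
        μ'.map liftIncl = μ := by
  have he := measurableEmbedding_liftIncl (A := A) (B := B) hp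
  obtain ⟨hprob, hmem, z₀, hz₀, hfin⟩ := hμ
  have hmap : (μ.comap liftIncl).map (liftIncl : A × WassersteinSpace p B → A × Measure B) = μ := by
    rw [he.map_comap, Measure.restrict_eq_self_of_ae_mem]
    filter_upwards [hmem] with z hz
    exact ⟨(z.1, ⟨z.2, hz⟩), rfl⟩
  refine ⟨μ.comap liftIncl, ?_, ⟨(z₀.1, ⟨z₀.2, hz₀⟩), ?_⟩, hmap⟩
  · exact (Measure.isProbabilityMeasure_map_iff he.measurable.aemeasurable).1 (hmap.symm ▸ hprob)
  · rw [← hmap, he.lintegral_map] at hfin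
    exact ENNReal.rpow_ne_top_of_nonneg (by positivity) hfin

theorem AWbar_map_liftIncl (hp : 1 ≤ p) :
    AWbar p dA edist (μ.map liftIncl) (ν.map liftIncl) = Wp p (liftedEDist p dA) μ ν :=
  Wp_map_measurableEmbedding (measurableEmbedding_liftIncl hp)

theorem liftCoupling_mem_Cpl (hp : 1 ≤ p) [SFinite ν]
    {κ : Kernel (A × WassersteinSpace p B) (A × WassersteinSpace p B)} [IsMarkovKernel κ]
    (hμ : κ ∘ₘ ν = μ) : liftCoupling ν κ ∈ Cpl (μ.map liftIncl) (ν.map liftIncl) :=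
  map_prodMap_mem_Cpl (map_swap_compProd_mem_Cpl_iff.2 hμ)
    (measurableEmbedding_liftIncl hp).measurable (measurableEmbedding_liftIncl hp).measurable

theorem setLIntegral_liftCoupling (hp : 1 ≤ p) [SFinite ν]
    {κ : Kernel (A × WassersteinSpace p B) (A × WassersteinSpace p B)} [IsSFiniteKernel κ]
    {S : Set (A × Measure B)} (hS : MeasurableSet S)
    {f : (A × Measure B) × (A × Measure B) → ℝ≥0∞}
    (hf : Measurable fun z : (A × WassersteinSpace p B) × (A × WassersteinSpace p B) =>
      f (liftIncl z.1, liftIncl z.2)) :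
    ∫⁻ z in {z | z.2 ∈ S}, f z ∂liftCoupling ν κ =
      ∫⁻ y in liftIncl ⁻¹' S, ∫⁻ x, f (liftIncl x, liftIncl y) ∂κ y ∂ν := by
  have he := measurableEmbedding_liftIncl (A := A) (B := B) hp
  have hee := he.prodMap he
  have hpre : Prod.swap ⁻¹' (Prod.map liftIncl liftIncl ⁻¹' {z | z.2 ∈ S}) =
      (liftIncl ⁻¹' S : Set (A × WassersteinSpace p B)) ×ˢ
        (Set.univ : Set (A × WassersteinSpace p B)) := by
    ext z
    simp [Set.mem_prod]
  have hS' : MeasurableSet {z : (A × Measure B) × (A × Measure B) | z.2 ∈ S} := measurable_snd hS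
  rw [liftCoupling, hee.restrict_map, hee.lintegral_map,
    setLIntegral_map (hee.measurable hS') (f := fun z => f (Prod.map liftIncl liftIncl z)) hf
      measurable_swap, hpre]
  exact (Measure.setLIntegral_compProd (f := fun z => f (liftIncl z.2, liftIncl z.1))
    (hf.comp measurable_swap) (he.measurable hS) .univ).trans
      (by simp only [Measure.restrict_univ])

variable [StandardBorelSpace B]

theorem exists_eq_liftCoupling [StandardBorelSpace A] (hp : 1 ≤ p) [IsProbabilityMeasure μ]
    [IsProbabilityMeasure ν] {γ : Measure ((A × Measure B) × (A × Measure B))}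
    (hγ : γ ∈ Cpl (μ.map liftIncl) (ν.map liftIncl)) :
    ∃ κ : Kernel (A × WassersteinSpace p B) (A × WassersteinSpace p B), IsMarkovKernel κ ∧
      κ ∘ₘ ν = μ ∧ γ = liftCoupling ν κ := by
  have := Fact.mk hp
  have he := measurableEmbedding_liftIncl (A := A) (B := B) hp
  obtain ⟨γ', hγ', rfl⟩ := exists_eq_map_of_mem_Cpl_map he he hγ
  obtain ⟨κ, hκ, rfl⟩ := exists_map_swap_compProd_eq hγ'
  exact ⟨κ, hκ, map_swap_compProd_mem_Cpl_iff.1 hγ', rfl⟩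

theorem isCondBar_liftCoupling_iff (hp : 1 ≤ p) [IsFiniteMeasure ν]
    {κ : Kernel (A × WassersteinSpace p B) (A × WassersteinSpace p B)} [IsMarkovKernel κ]
    {g : A × Measure B → Measure B} (hg : Measurable g) [∀ w, IsProbabilityMeasure (g w)] :
    IsCondBar (liftCoupling ν κ) (fun z => g z.2) ↔
      ∀ᵐ y ∂ν, g (liftIncl y) = barycenter (κ y) := by
  have he := measurableEmbedding_liftIncl (A := A) (B := B) hp
  let k₁ : Kernel (A × WassersteinSpace p B) B := ⟨fun y => g (liftIncl y), hg.comp he.measurable⟩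
  let k₂ : Kernel (A × WassersteinSpace p B) B :=
    ⟨fun y => barycenter (κ y), measurable_barycenter.comp κ.measurable⟩
  have : IsMarkovKernel k₁ := ⟨fun y => ‹∀ w, IsProbabilityMeasure (g w)› _⟩
  have : IsMarkovKernel k₂ := ⟨fun y => inferInstanceAs (IsProbabilityMeasure (barycenter (κ y)))⟩
  have hg_int : ∀ {S}, MeasurableSet S → ∀ {E}, MeasurableSet E →
      ∫⁻ z in {z | z.2 ∈ S}, g z.2 E ∂liftCoupling ν κ = ∫⁻ y in liftIncl ⁻¹' S, k₁ y E ∂ν := by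
    intro S hS E hE
    rw [setLIntegral_liftCoupling hp hS
      ((Measure.measurable_coe hE).comp (hg.comp (he.measurable.comp measurable_snd)))]
    simp [k₁]
  have hκ_int : ∀ {S}, MeasurableSet S → ∀ {E}, MeasurableSet E →
      ∫⁻ z in {z | z.2 ∈ S}, z.1.2 E ∂liftCoupling ν κ = ∫⁻ y in liftIncl ⁻¹' S, k₂ y E ∂ν := by
    intro S hS E hE
    rw [setLIntegral_liftCoupling hp hS ((Measure.measurable_coe hE).comp
      (measurable_snd.comp (he.measurable.comp measurable_fst)))]
    exact lintegral_congr fun y => (barycenter_apply hE).symm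
  constructor
  · rintro ⟨-, -, h⟩
    refine Kernel.ae_eq_of_compProd_eq (κ := k₁) (η := k₂) (
      Measure.ext_prod fun {S E} hpre hE => ?_)
    obtain ⟨S, hS, rfl⟩ : ∃ S', MeasurableSet S' ∧ liftIncl ⁻¹' S' = S :=
      ⟨liftIncl '' S, he.measurableSet_image.2 hpre, Set.preimage_image_eq S he.injective⟩
    rw [Measure.compProd_apply_prod hpre hE, Measure.compProd_apply_prod hpre hE, ← hg_int hS hE,
      ← hκ_int hS hE, h S hS E hE]
  · refine fun h => ⟨⟨g, hg, fun _ => rfl⟩, fun _ => inferInstance, fun S hS E hE => ?_⟩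
    rw [hg_int hS hE, hκ_int hS hE]
    exact lintegral_congr_ae (ae_restrict_of_ae (h.mono fun y hy => congrArg (· E) hy))

variable [SecondCountableTopology B] [Nonempty B]

theorem lintegral_liftCoupling_cost (hp : 1 ≤ p) (hdA : IsMeasurableEDist dA) [SFinite ν]
    {κ : Kernel (A × WassersteinSpace p B) (A × WassersteinSpace p B)} [IsMarkovKernel κ]
    {g : A × Measure B → Measure B} (hg : Measurable g) [∀ w, IsProbabilityMeasure (g w)]
    (h : ∀ᵐ y ∂ν, g (liftIncl y) = barycenter (κ y)) :
    (∫⁻ z, (dA z.1.1 z.2.1 ^ p + Wp p edist (g z.2) z.2.2 ^ p) ∂liftCoupling ν κ) ^ (1 / p) =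
      lpCost p ν fun y => causalCost p dA (κ y) y := by
  have hp0 : 0 < p := by positivity
  have he := measurableEmbedding_liftIncl (A := A) (B := B) hp
  have hdist : Measurable fun z : (A × WassersteinSpace p B) × (A × WassersteinSpace p B) =>
      dA z.1.1 z.2.1 ^ p :=
    (hdA.measurable_comp (by fun_prop) (by fun_prop)).pow_const p
  have hW : Measurable fun z : (A × WassersteinSpace p B) × (A × WassersteinSpace p B) =>
      Wp p edist (g (liftIncl z.2)) z.2.2.1 ^ p :=
    (measurable_Wp hp (hg.comp (he.measurable.comp measurable_snd))
      (measurable_snd.comp measurable_snd) fun _ => ‹∀ w, IsProbabilityMeasure (g w)› _).pow_const p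
  have hint := setLIntegral_liftCoupling hp (ν := ν) (κ := κ) .univ
    (f := fun z => dA z.1.1 z.2.1 ^ p + Wp p edist (g z.2) z.2.2 ^ p) (hdist.add hW)
  simp only [Set.mem_univ, Set.ofPred_true, Set.preimage_univ, Measure.restrict_univ] at hint
  rw [hint, lpCost]
  refine congrArg (· ^ (1 / p)) (lintegral_congr_ae (h.mono fun y hy => ?_))
  simp only [causalCost, lpAdd_rpow hp0, lpCost_rpow hp0, hy]
  rw [lintegral_add_right _ measurable_const, lintegral_const, measure_univ, mul_one]
  rfl

theorem CWbar_map_liftIncl [StandardBorelSpace A] (hp : 1 ≤ p) (hdA : IsMeasurableEDist dA)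
    [IsProbabilityMeasure μ] [IsProbabilityMeasure ν] :
    CWbar p dA edist (μ.map liftIncl) (ν.map liftIncl) = causalWp p dA μ ν := by
  have he := measurableEmbedding_liftIncl (A := A) (B := B) hp
  refine le_antisymm ?_ ?_
  · refine le_iInf fun κ => le_iInf fun _ => le_iInf fun hμ => ?_
    let bar : A × WassersteinSpace p B → ProbabilityMeasure B :=
      fun y => ⟨barycenter (κ y), inferInstance⟩
    have hbar : Measurable bar := (measurable_barycenter.comp κ.measurable).subtype_mk
    obtain ⟨g, hg, hge⟩ := he.exists_measurable_extend hbar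
      fun _ => ⟨⟨.dirac Classical.ofNonempty, inferInstance⟩⟩
    have hcond : ∀ y, (g (liftIncl y) : Measure B) = barycenter (κ y) :=
      fun y => congrArg Subtype.val (congrFun hge y)
    have hg' : Measurable fun w => (g w : Measure B) := measurable_subtype_coe.comp hg
    rw [← lintegral_liftCoupling_cost hp hdA hg' (ae_of_all _ hcond)]
    exact iInf₂_le_of_le _ (liftCoupling_mem_Cpl hp hμ)
      (iInf₂_le _ ((isCondBar_liftCoupling_iff hp hg').2 (ae_of_all _ hcond)))
  · refine le_iInf₂ fun γ hγ => le_iInf₂ fun η hη => ?_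
    obtain ⟨κ, _, hμ, rfl⟩ := exists_eq_liftCoupling hp hγ
    obtain ⟨g, hg, hηg⟩ := hη.1
    obtain rfl : η = fun z => g z.2 := funext hηg
    have hprob : ∀ w, IsProbabilityMeasure (g w) := fun w => hη.2.1 (w, w)
    rw [lintegral_liftCoupling_cost hp hdA hg ((isCondBar_liftCoupling_iff hp hg).1 hη)]
    exact causalWp_le_lpCost hμ

end LiftIncl

/-! ### From causal to full transport -/

section LipschitzTest

open scoped NNReal

variable {B Z : Type*} [MeasurableSpace Z] {p : ℝ} {f : B → ℝ≥0} {K : ℝ≥0}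

theorem lintegral_le_lpCost (hp : 1 ≤ p) {P : Measure Z} [IsProbabilityMeasure P] {g : Z → ℝ≥0∞}
    (hg : AEMeasurable g P) : ∫⁻ z, g z ∂P ≤ lpCost p P g := by
  simpa [eLpNorm', lpCost] using
    eLpNorm'_le_eLpNorm'_of_exponent_le one_pos hp P hg.aestronglyMeasurable

theorem coe_le_coe_add_of_lipschitzWith [PseudoMetricSpace B] (hf : LipschitzWith K f) (x y : B) :
    (f x : ℝ≥0∞) ≤ f y + K * edist x y := by
  refine le_trans ?_ (add_le_add_right (hf x y) _)
  rw [edist_nndist, ← ENNReal.coe_add, ENNReal.coe_le_coe, NNReal.nndist_eq]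
  exact le_add_tsub.trans (add_le_add_right (le_max_left _ _) _)

variable [MeasurableSpace B]

theorem lintegral_coe_le_one (hf : ∀ x, f x ≤ 1) (m : Measure B) [IsProbabilityMeasure m] :
    ∫⁻ x, f x ∂m ≤ 1 := by
  simpa using lintegral_mono (μ := m) fun x => ENNReal.coe_le_one_iff.2 (hf x)

theorem lintegral_sq_sub_add_sq_le {P : Measure Z} [IsProbabilityMeasure P] {F : Z → ℝ≥0∞}
    (hF : Measurable F) (hfin : ∫⁻ z, F z ∂P ≠ ∞) :
    ∫⁻ z, (F z - ∫⁻ w, F w ∂P) ^ 2 ∂P + (∫⁻ z, F z ∂P) ^ 2 ≤ ∫⁻ z, F z ^ 2 ∂P := by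
  set a := ∫⁻ z, F z ∂P with ha
  have hsq : ∀ t : ℝ≥0∞, 2 * a * t + (t - a) ^ 2 ≤ t ^ 2 + a ^ 2 := fun t => by
    rcases le_total t a with h | h
    · obtain ⟨c, hc⟩ := exists_add_of_le h
      rw [tsub_eq_zero_of_le h, hc]
      exact le_self_add.trans_eq (by ring : _ + c ^ 2 = _)
    · obtain ⟨c, rfl⟩ := exists_add_of_le h
      rw [ENNReal.add_sub_cancel_left hfin]
      exact le_of_eq (by ring)
  have hint := lintegral_mono (μ := P) fun z => hsq (F z)
  rw [lintegral_add_left (hF.const_mul _), lintegral_const_mul _ hF, ← ha,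
    lintegral_add_right _ measurable_const, lintegral_const, measure_univ, mul_one] at hint
  refine (ENNReal.add_le_add_iff_right (ENNReal.pow_ne_top hfin : a ^ 2 ≠ ∞)).1 ?_
  exact le_trans (le_of_eq (by ring)) hint

theorem sub_le_lintegral_sub_add {g : B → ℝ≥0∞} (hg : Measurable g) {S : Set B}
    (hS : MeasurableSet S) (m n : Measure B) :
    m S - n S ≤ (∫⁻ x, g x ∂m - ∫⁻ x, g x ∂n) +
      (∫⁻ x, (S.indicator 1 x - g x) ∂m + ∫⁻ x, (g x - S.indicator 1 x) ∂n) := by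
  have hind : Measurable (S.indicator (1 : B → ℝ≥0∞)) := measurable_one.indicator hS
  have hm : m S ≤ ∫⁻ x, g x ∂m + ∫⁻ x, (S.indicator 1 x - g x) ∂m := by
    rw [← lintegral_indicator_one hS, ← lintegral_add_left hg]
    exact lintegral_mono fun x => le_add_tsub
  have hn : ∫⁻ x, g x ∂n ≤ n S + ∫⁻ x, (g x - S.indicator 1 x) ∂n := by
    rw [← lintegral_indicator_one (μ := n) hS, ← lintegral_add_left hind]
    exact lintegral_mono fun x => le_add_tsub
  rw [tsub_le_iff_right]
  calc m S ≤ ∫⁻ x, g x ∂m + ∫⁻ x, (S.indicator 1 x - g x) ∂m := hm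
    _ ≤ (∫⁻ x, g x ∂m - ∫⁻ x, g x ∂n) + (n S + ∫⁻ x, (g x - S.indicator 1 x) ∂n) +
          ∫⁻ x, (S.indicator 1 x - g x) ∂m := by
        gcongr
        exact le_tsub_add.trans (by gcongr)
    _ = _ := by ring

variable [PseudoMetricSpace B] [BorelSpace B]

theorem exists_lipschitzWith_lintegral_sub_le (I : Measure B) [IsFiniteMeasure I] {S : Set B}
    (hS : MeasurableSet S) {ε : ℝ≥0∞} (hε : ε ≠ 0) :
    ∃ (f : B → ℝ≥0) (K : ℝ≥0), LipschitzWith K f ∧ (∀ x, f x ≤ 1) ∧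
      ∫⁻ x, (S.indicator 1 x - f x) ∂I ≤ ε ∧ ∫⁻ x, (f x - S.indicator 1 x) ∂I ≤ ε := by
  obtain ⟨F, hFS, hF, hlt⟩ := hS.exists_isClosed_sdiff_lt (measure_ne_top I S) hε
  have hlim := tendsto_lintegral_thickenedIndicator_of_isClosed I hF
    (fun n : ℕ => by positivity) tendsto_one_div_add_atTop_nhds_zero_nat
  obtain ⟨n, hn⟩ := (hlim.eventually
    (gt_mem_nhds (ENNReal.lt_add_right (measure_ne_top I F) hε))).exists
  have hpos : (0 : ℝ) < 1 / ((n : ℝ) + 1) := by positivity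
  let f : B → ℝ≥0 := thickenedIndicator hpos F
  have hf : LipschitzWith _ f := lipschitzWith_thickenedIndicator hpos F
  have hFf : ∀ x, F.indicator 1 x ≤ (f x : ℝ≥0∞) := fun x => by
    by_cases hx : x ∈ F
    · have hfx : f x = 1 := thickenedIndicator_one hpos F hx
      simp [hx, hfx]
    · simp [hx]
  refine ⟨f, _, hf, thickenedIndicator_le_one hpos F, ?_, ?_⟩
  · have hle : ∀ x, S.indicator 1 x - (f x : ℝ≥0∞) ≤ (S \ F).indicator 1 x := fun x => by
      refine (tsub_le_tsub_left (hFf x) _).trans_eq ?_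
      by_cases hxF : x ∈ F
      · simp [hxF, hFS hxF]
      · by_cases hxS : x ∈ S <;> simp [hxF, hxS]
    refine (lintegral_mono hle).trans ?_
    rw [lintegral_indicator_one (hS.diff hF.measurableSet)]
    exact hlt.le
  · have hle : ∀ x, (f x : ℝ≥0∞) - S.indicator 1 x ≤ f x - F.indicator 1 x := fun x =>
      tsub_le_tsub_left (Set.indicator_le_indicator_of_subset hFS (fun _ => zero_le) x) _
    refine (lintegral_mono hle).trans ?_
    rw [lintegral_sub (measurable_one.indicator hF.measurableSet)
      (by simp [lintegral_indicator_one hF.measurableSet]) (ae_of_all _ hFf),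
      lintegral_indicator_one hF.measurableSet, tsub_le_iff_left]
    exact hn.le

theorem lintegral_le_lintegral_add_Wp [SecondCountableTopology B] (hp : 1 ≤ p)
    (hf : LipschitzWith K f) (m n : Measure B) [IsProbabilityMeasure m] [IsProbabilityMeasure n] :
    ∫⁻ x, f x ∂m ≤ ∫⁻ x, f x ∂n + K * Wp p edist m n := by
  have hfm : Measurable fun x => (f x : ℝ≥0∞) := hf.continuous.measurable.coe_nnreal_ennreal
  have hfm₂ : Measurable fun z : B × B => (f z.2 : ℝ≥0∞) := hfm.comp measurable_snd
  have : Nonempty (Cpl m n) := ⟨⟨_, prod_mem_Cpl m n⟩⟩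
  rw [Wp, iInf_subtype', ENNReal.mul_iInf' (fun h => (ENNReal.coe_ne_top h).elim) fun _ => this,
    ENNReal.add_iInf]
  refine le_iInf fun ⟨γ, hγ⟩ => ?_
  have := isProbabilityMeasure_of_mem_Cpl hγ
  calc ∫⁻ x, f x ∂m = ∫⁻ z, f z.1 ∂γ := by rw [← hγ.1, lintegral_map hfm measurable_fst]
    _ ≤ ∫⁻ z, (f z.2 + K * edist z.1 z.2) ∂γ :=
        lintegral_mono fun z => coe_le_coe_add_of_lipschitzWith hf z.1 z.2
    _ = ∫⁻ z, f z.2 ∂γ + K * ∫⁻ z, edist z.1 z.2 ∂γ := by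
        rw [lintegral_add_left hfm₂, lintegral_const_mul _ measurable_edist]
    _ ≤ ∫⁻ x, f x ∂n + K * lpCost p γ fun z => edist z.1 z.2 := by
        rw [← hγ.2, lintegral_map hfm measurable_snd]
        gcongr
        exact lintegral_le_lpCost hp measurable_edist.aemeasurable

end LipschitzTest

section Comparison

open scoped NNReal

variable {A B : Type*} [MeasurableSpace A] [PseudoMetricSpace B] [MeasurableSpace B] {p : ℝ}
  {dA : A → A → ℝ≥0∞} {μ ν : Measure (A × WassersteinSpace p B)}
  {κ : Kernel (A × WassersteinSpace p B) (A × WassersteinSpace p B)} {δ : ℝ≥0∞}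
  {f : B → ℝ≥0} {K : ℝ≥0}

/-- The kernel `κ` disintegrates a causal coupling of `μ` and `ν` of cost less than `δ`, and the
causal distance in the opposite direction is less than `δ` as well. Such a `κ` exists if and only if
the symmetrized causal distance of `μ` and `ν` is less than `δ`. -/
structure IsBicausalWitness (p : ℝ) (dA : A → A → ℝ≥0∞) (μ ν : Measure (A × WassersteinSpace p B))
    (κ : Kernel (A × WassersteinSpace p B) (A × WassersteinSpace p B)) (δ : ℝ≥0∞) : Prop where
  comp_eq : κ ∘ₘ ν = μ
  lpCost_lt : lpCost p ν (fun y => causalCost p dA (κ y) y) < δ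
  causalWp_lt : causalWp p dA ν μ < δ

/-- The second moment under `μ` of the functional `(x, m) ↦ ∫ f dm`. -/
def secondMoment (μ : Measure (A × WassersteinSpace p B)) (f : B → ℝ≥0∞) : ℝ≥0∞ :=
  ∫⁻ x, (∫⁻ b, f b ∂x.2.1) ^ 2 ∂μ

theorem measurable_lintegral_snd {g : B → ℝ≥0∞} (hg : Measurable g) :
    Measurable fun x : A × WassersteinSpace p B => ∫⁻ b, g b ∂x.2.1 :=
  (Measure.measurable_lintegral hg).comp (measurable_subtype_coe.comp measurable_snd)

theorem measurable_lintegral_barycenter_kernel {g : B → ℝ≥0∞} (hg : Measurable g)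
    (κ : Kernel (A × WassersteinSpace p B) (A × WassersteinSpace p B)) :
    Measurable fun y => ∫⁻ b, g b ∂barycenter (κ y) :=
  (Measure.measurable_lintegral hg).comp (measurable_barycenter.comp κ.measurable)

theorem lintegral_compProd_snd [SFinite ν] [IsSFiniteKernel κ] {g : B → ℝ≥0∞}
    (hg : Measurable g) :
    ∫⁻ z, ∫⁻ b, g b ∂z.2.2.1 ∂(ν ⊗ₘ κ) = ∫⁻ b, g b ∂barycenter (κ ∘ₘ ν) := by
  rw [lintegral_barycenter hg, ← Measure.snd_compProd, Measure.snd,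
    lintegral_map (measurable_lintegral_snd hg) measurable_snd]

theorem lintegral_compProd_barycenter [SFinite ν] [IsMarkovKernel κ] {g : B → ℝ≥0∞}
    (hg : Measurable g) :
    ∫⁻ z, ∫⁻ b, g b ∂barycenter (κ z.1) ∂(ν ⊗ₘ κ) = ∫⁻ b, g b ∂barycenter (κ ∘ₘ ν) := by
  have hbar : Measurable fun y => barycenter (κ y) := measurable_barycenter.comp κ.measurable
  have hG : Measurable fun z : (A × WassersteinSpace p B) × (A × WassersteinSpace p B) =>
      ∫⁻ b, g b ∂barycenter (κ z.1) :=
    (measurable_lintegral_barycenter_kernel hg κ).comp measurable_fst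
  rw [barycenter_bind κ.measurable, Measure.lintegral_bind hbar.aemeasurable hg.aemeasurable,
    Measure.lintegral_compProd hG]
  simp

theorem lintegral_sq_sub_add_lintegral_sq_le_secondMoment [SFinite ν] [IsMarkovKernel κ]
    {g : B → ℝ≥0∞} (hg : Measurable g) (hg1 : ∀ b, g b ≤ 1) :
    ∫⁻ z, (∫⁻ b, g b ∂z.2.2.1 - ∫⁻ b, g b ∂barycenter (κ z.1)) ^ 2 ∂(ν ⊗ₘ κ) +
      ∫⁻ y, (∫⁻ b, g b ∂barycenter (κ y)) ^ 2 ∂ν ≤ secondMoment (κ ∘ₘ ν) g := by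
  have hF := measurable_lintegral_snd (A := A) (p := p) hg
  have hG := measurable_lintegral_barycenter_kernel hg κ
  have hfin : ∀ y, ∫⁻ x, ∫⁻ b, g b ∂x.2.1 ∂κ y ≠ ∞ := fun y => by
    rw [← lintegral_barycenter hg]
    refine ne_top_of_le_ne_top one_ne_top ?_
    simpa using lintegral_mono (μ := barycenter (κ y)) hg1
  have hsq : Measurable fun z : (A × WassersteinSpace p B) × (A × WassersteinSpace p B) =>
      (∫⁻ b, g b ∂z.2.2.1 - ∫⁻ b, g b ∂barycenter (κ z.1)) ^ 2 :=
    ((hF.comp measurable_snd).sub (hG.comp measurable_fst)).pow_const 2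
  rw [Measure.lintegral_compProd hsq,
    ← lintegral_add_right _ (hG.pow_const 2), secondMoment,
    Measure.lintegral_bind κ.measurable.aemeasurable (hF.pow_const 2).aemeasurable]
  refine lintegral_mono fun y => ?_
  simp only [lintegral_barycenter hg]
  exact lintegral_sq_sub_add_sq_le hF (hfin y)

theorem sq_le_sq_add_two_mul {a b c : ℝ≥0∞} (ha : a ≤ 1) (hb : b ≤ 1) (h : a ≤ b + c) :
    a ^ 2 ≤ b ^ 2 + 2 * c :=
  calc a ^ 2 = a * a := sq a
    _ ≤ a * (b + c) := by gcongr
    _ ≤ (b + c) * b + 1 * c := by rw [mul_add]; gcongr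
    _ = b ^ 2 + c * b + c := by ring
    _ ≤ b ^ 2 + c * 1 + c := by gcongr
    _ = b ^ 2 + 2 * c := by ring

variable [BorelSpace B] [SecondCountableTopology B] [StandardBorelSpace B] [Nonempty B]

theorem secondMoment_le_lintegral_sq_add (hp : 1 ≤ p) (hdA : IsMeasurableEDist dA)
    [IsProbabilityMeasure ν] [IsMarkovKernel κ] (hf : LipschitzWith K f) (hf1 : ∀ b, f b ≤ 1) :
    secondMoment ν (fun b => f b) ≤ ∫⁻ y, (∫⁻ b, f b ∂barycenter (κ y)) ^ 2 ∂ν +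
      2 * (K * lpCost p ν fun y => causalCost p dA (κ y) y) := by
  have hc : Measurable fun y => causalCost p dA (κ y) y :=
    (measurable_causalCost hp hdA κ).comp (measurable_id.prodMk measurable_id)
  have hW : ∀ y, Wp p edist y.2.1 (barycenter (κ y)) ≤ causalCost p dA (κ y) y := fun y =>
    (Wp_comm isMeasurableEDist_edist ..).trans_le (le_lpAdd_right (by positivity) _ _)
  have hpoint : ∀ y : A × WassersteinSpace p B, (∫⁻ b, f b ∂y.2.1) ^ 2 ≤
      (∫⁻ b, f b ∂barycenter (κ y)) ^ 2 + 2 * (K * causalCost p dA (κ y) y) := fun y =>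
    sq_le_sq_add_two_mul (lintegral_coe_le_one hf1 _) (lintegral_coe_le_one hf1 _)
      ((lintegral_le_lintegral_add_Wp hp hf _ _).trans (by gcongr; exact hW y))
  refine (lintegral_mono hpoint).trans ?_
  rw [lintegral_add_right _ ((hc.const_mul _).const_mul _), lintegral_const_mul _ (hc.const_mul _),
    lintegral_const_mul _ hc]
  gcongr
  exact lintegral_le_lpCost hp hc.aemeasurable

theorem secondMoment_le_of_causalWp_lt (hp : 1 ≤ p) (hdA : IsMeasurableEDist dA)
    [IsProbabilityMeasure ν] (h : causalWp p dA μ ν < δ) (hf : LipschitzWith K f)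
    (hf1 : ∀ b, f b ≤ 1) :
    secondMoment ν (fun b => f b) ≤ secondMoment μ (fun b => f b) + 2 * (K * δ) := by
  obtain ⟨κ, _, rfl, hκ⟩ := causalWp_lt_iff.1 h
  refine (secondMoment_le_lintegral_sq_add hp hdA hf hf1).trans (add_le_add ?_ (by gcongr))
  exact le_add_self.trans (lintegral_sq_sub_add_lintegral_sq_le_secondMoment
    hf.continuous.measurable.coe_nnreal_ennreal fun b => ENNReal.coe_le_one_iff.2 (hf1 b))

namespace IsBicausalWitness

theorem lintegral_sq_sub_le (h : IsBicausalWitness p dA μ ν κ δ) (hp : 1 ≤ p)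
    (hdA : IsMeasurableEDist dA) [IsProbabilityMeasure μ] [IsProbabilityMeasure ν]
    [IsMarkovKernel κ] (hf : LipschitzWith K f) (hf1 : ∀ b, f b ≤ 1) :
    ∫⁻ z, (∫⁻ b, f b ∂z.2.2.1 - ∫⁻ b, f b ∂barycenter (κ z.1)) ^ 2 ∂(ν ⊗ₘ κ) ≤ 4 * K * δ := by
  set V := ∫⁻ z, (∫⁻ b, f b ∂z.2.2.1 - ∫⁻ b, f b ∂barycenter (κ z.1)) ^ 2 ∂(ν ⊗ₘ κ)
  set M := ∫⁻ y, (∫⁻ b, f b ∂barycenter (κ y)) ^ 2 ∂ν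
  have hM : M ≠ ∞ := by
    refine ne_top_of_le_ne_top one_ne_top ?_
    simpa using lintegral_mono (μ := ν) fun y =>
      pow_le_one' (lintegral_coe_le_one hf1 (barycenter (κ y))) 2
  have hjensen : V + M ≤ secondMoment μ fun b => f b := h.comp_eq ▸
    lintegral_sq_sub_add_lintegral_sq_le_secondMoment
      hf.continuous.measurable.coe_nnreal_ennreal fun b => ENNReal.coe_le_one_iff.2 (hf1 b)
  have hback : secondMoment μ (fun b => f b) ≤ secondMoment ν (fun b => f b) + 2 * (K * δ) :=
    secondMoment_le_of_causalWp_lt hp hdA h.causalWp_lt hf hf1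
  have hforth : secondMoment ν (fun b => f b) ≤ M + 2 * (K * δ) :=
    (secondMoment_le_lintegral_sq_add hp hdA hf hf1).trans (by gcongr; exact h.lpCost_lt.le)
  refine (ENNReal.add_le_add_iff_right hM).1 ?_
  calc V + M ≤ M + 2 * (K * δ) + 2 * (K * δ) := hjensen.trans (hback.trans (by gcongr))
    _ = 4 * K * δ + M := by ring

theorem lintegral_sub_le (h : IsBicausalWitness p dA μ ν κ δ) (hp : 1 ≤ p)
    (hdA : IsMeasurableEDist dA) [IsProbabilityMeasure μ] [IsProbabilityMeasure ν]
    [IsMarkovKernel κ] (hf : LipschitzWith K f) (hf1 : ∀ b, f b ≤ 1) :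
    ∫⁻ z, (∫⁻ b, f b ∂z.2.2.1 - ∫⁻ b, f b ∂barycenter (κ z.1)) ∂(ν ⊗ₘ κ) ≤
      (4 * K * δ) ^ (1 / 2 : ℝ) := by
  have hfm : Measurable fun b => (f b : ℝ≥0∞) := hf.continuous.measurable.coe_nnreal_ennreal
  refine (lintegral_le_lpCost one_le_two (((measurable_lintegral_snd hfm).comp measurable_snd).sub
    ((measurable_lintegral_barycenter_kernel hfm κ).comp measurable_fst)).aemeasurable).trans ?_
  refine ENNReal.rpow_le_rpow ?_ (by positivity)
  simpa using h.lintegral_sq_sub_le hp hdA hf hf1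

end IsBicausalWitness

theorem tendsto_mul_rpow_nhds_zero {c : ℝ≥0∞} (hc : c ≠ ∞) {r : ℝ} (hr : 0 < r) :
    Tendsto (fun x : ℝ≥0∞ => (c * x) ^ r) (𝓝 0) (𝓝 0) := by
  simpa [ENNReal.zero_rpow_of_pos hr] using
    (ENNReal.Tendsto.const_mul (b := 0) tendsto_id (Or.inr hc)).ennrpow_const r

theorem eventually_lintegral_sub_apply_le (hp : 1 ≤ p) (hdA : IsMeasurableEDist dA)
    (μ : Measure (A × WassersteinSpace p B)) [IsProbabilityMeasure μ] {S : Set B}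
    (hS : MeasurableSet S) {ε : ℝ≥0∞} (hε : ε ≠ 0) : ∀ᶠ δ in 𝓝 0,
      ∀ (ν : Measure (A × WassersteinSpace p B))
        (κ : Kernel (A × WassersteinSpace p B) (A × WassersteinSpace p B)),
        IsProbabilityMeasure ν → IsMarkovKernel κ → IsBicausalWitness p dA μ ν κ δ →
        ∫⁻ z, (z.2.2.1 S - barycenter (κ z.1) S) ∂(ν ⊗ₘ κ) ≤ ε := by
  obtain ⟨f, K, hf, hf1, hSf, hfS⟩ := exists_lipschitzWith_lintegral_sub_le (barycenter μ) hS
    (ENNReal.div_ne_zero.2 ⟨hε, ofNat_ne_top⟩ : ε / 3 ≠ 0)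
  have hlim := tendsto_mul_rpow_nhds_zero
    (ENNReal.mul_ne_top (by simp) (by simp) : 4 * (K : ℝ≥0∞) ≠ ∞) one_half_pos
  filter_upwards [hlim.eventually_le_const (ENNReal.div_pos hε (by simp : (3 : ℝ≥0∞) ≠ ∞))]
    with δ hδ ν κ _ _ h
  have hfm : Measurable fun b => (f b : ℝ≥0∞) := hf.continuous.measurable.coe_nnreal_ennreal
  have hind : Measurable (S.indicator (1 : B → ℝ≥0∞)) := measurable_one.indicator hS
  have hdown : Measurable fun b => S.indicator 1 b - (f b : ℝ≥0∞) := hind.sub hfm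
  have hup : Measurable fun b => (f b : ℝ≥0∞) - S.indicator 1 b := hfm.sub hind
  refine (lintegral_mono fun z => sub_le_lintegral_sub_add hfm hS _ _).trans ?_
  have h₂ : Measurable fun z : (A × WassersteinSpace p B) × (A × WassersteinSpace p B) =>
      ∫⁻ b, (f b - S.indicator 1 b) ∂barycenter (κ z.1) :=
    (measurable_lintegral_barycenter_kernel hup κ).comp measurable_fst
  have h₁₂ : Measurable fun z : (A × WassersteinSpace p B) × (A × WassersteinSpace p B) =>
      ∫⁻ b, (S.indicator 1 b - f b) ∂z.2.2.1 +
        ∫⁻ b, (f b - S.indicator 1 b) ∂barycenter (κ z.1) :=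
    ((measurable_lintegral_snd hdown).comp measurable_snd).add h₂
  rw [lintegral_add_right _ h₁₂, lintegral_add_right _ h₂,
    lintegral_compProd_snd hdown, lintegral_compProd_barycenter hup, h.comp_eq]
  calc _ ≤ ε / 3 + (ε / 3 + ε / 3) := by
        gcongr
        exact (h.lintegral_sub_le hp hdA hf hf1).trans hδ
    _ = ε := by rw [← add_assoc, ENNReal.add_thirds]

end Comparison

section Dispersion

variable {A B : Type*} [MeasurableSpace A] [PseudoMetricSpace B] [MeasurableSpace B] {p : ℝ}
  {dA : A → A → ℝ≥0∞} {μ ν : Measure (A × WassersteinSpace p B)}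
  {κ : Kernel (A × WassersteinSpace p B) (A × WassersteinSpace p B)}

/-- The `L^p` distance between `X̂₂` and its conditional expectation `E[X̂₂ | Y⃗]`, for `Y⃗ ∼ ν` and
`X ∼ κ Y⃗`. -/
def dispersion (ν : Measure (A × WassersteinSpace p B))
    (κ : Kernel (A × WassersteinSpace p B) (A × WassersteinSpace p B)) : ℝ≥0∞ :=
  lpCost p (ν ⊗ₘ κ) fun z => Wp p edist z.2.2.1 (barycenter (κ z.1))

theorem lpCost_compProd_snd (hp : 0 < p) [SFinite ν] [IsSFiniteKernel κ] {g : B → ℝ≥0∞}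
    (hg : Measurable g) :
    lpCost p (ν ⊗ₘ κ) (fun z => lpCost p z.2.2.1 g) = lpCost p (barycenter (κ ∘ₘ ν)) g := by
  rw [lpCost, lpCost, ← lintegral_compProd_snd (hg.pow_const p)]
  simp only [lpCost_rpow hp]

theorem lpCost_compProd_barycenter (hp : 0 < p) [SFinite ν] [IsMarkovKernel κ] {g : B → ℝ≥0∞}
    (hg : Measurable g) :
    lpCost p (ν ⊗ₘ κ) (fun z => lpCost p (barycenter (κ z.1)) g) =
      lpCost p (barycenter (κ ∘ₘ ν)) g := by
  rw [lpCost, lpCost, ← lintegral_compProd_barycenter (hg.pow_const p)]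
  simp only [lpCost_rpow hp]

variable [BorelSpace B] [SecondCountableTopology B] [StandardBorelSpace B]

theorem dispersion_le (hp : 1 ≤ p) [SFinite ν] [IsMarkovKernel κ] (T : SimpleFunc B B)
    {D : ℝ≥0∞} (hD : ∀ x y, edist (T x) (T y) ≤ D) :
    dispersion ν κ ≤ 2 * lpCost p (barycenter (κ ∘ₘ ν)) (fun b => edist b (T b)) +
      (D ^ p * ∑ b ∈ T.range,
        ∫⁻ z, (z.2.2.1 (T ⁻¹' {b}) - barycenter (κ z.1) (T ⁻¹' {b})) ∂(ν ⊗ₘ κ)) ^ (1 / p) := by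
  have hp0 : 0 < p := by positivity
  have hT : Measurable fun b => edist b (T b) := measurable_id.edist T.measurable
  let m : (A × WassersteinSpace p B) × (A × WassersteinSpace p B) → Measure B := fun z => z.2.2.1
  let n : (A × WassersteinSpace p B) × (A × WassersteinSpace p B) → Measure B :=
    fun z => barycenter (κ z.1)
  have hm : Measurable m := measurable_subtype_coe.comp (measurable_snd.comp measurable_snd)
  have hn : Measurable n := measurable_barycenter.comp (κ.measurable.comp measurable_fst)
  have hmT : Measurable fun z => lpCost p (m z) fun b => edist b (T b) :=
    (measurable_lpCost hT).comp hm
  have hnT : Measurable fun z => lpCost p (n z) fun b => edist b (T b) :=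
    (measurable_lpCost hT).comp hn
  have hfiber : ∀ b, Measurable fun z => m z (T ⁻¹' {b}) - n z (T ⁻¹' {b}) := fun b =>
    ((Measure.measurable_coe (T.measurableSet_fiber b)).comp hm).sub
      ((Measure.measurable_coe (T.measurableSet_fiber b)).comp hn)
  have hsum : Measurable fun z => ∑ b ∈ T.range, (m z (T ⁻¹' {b}) - n z (T ⁻¹' {b})) :=
    Finset.measurable_fun_sum _ fun b _ => hfiber b
  let R : (A × WassersteinSpace p B) × (A × WassersteinSpace p B) → ℝ≥0∞ := fun z =>
    (D ^ p * ∑ b ∈ T.range, (m z (T ⁻¹' {b}) - n z (T ⁻¹' {b}))) ^ (1 / p)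
  have hRcost : lpCost p (ν ⊗ₘ κ) R = (D ^ p * ∑ b ∈ T.range,
      ∫⁻ z, (m z (T ⁻¹' {b}) - n z (T ⁻¹' {b})) ∂(ν ⊗ₘ κ)) ^ (1 / p) := by
    rw [lpCost_rpow_one_div hp0, lintegral_const_mul _ hsum,
      lintegral_finsetSum _ fun b _ => hfiber b]
  calc dispersion ν κ
      ≤ lpCost p (ν ⊗ₘ κ) fun z => lpCost p (m z) (fun b => edist b (T b)) +
          lpCost p (n z) (fun b => edist b (T b)) + R z :=
        lpCost_mono hp0 fun z => Wp_le_of_simpleFunc hp isMeasurableEDist_edist T hD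
    _ ≤ lpCost p (ν ⊗ₘ κ) (fun z => lpCost p (m z) fun b => edist b (T b)) +
          lpCost p (ν ⊗ₘ κ) (fun z => lpCost p (n z) fun b => edist b (T b)) +
          lpCost p (ν ⊗ₘ κ) R :=
        (lpCost_add_le hp (hmT.add hnT).aemeasurable
          ((hsum.const_mul _).pow_const _).aemeasurable).trans
          (add_le_add_left (lpCost_add_le hp hmT.aemeasurable hnT.aemeasurable) _)
    _ = _ := by
        rw [lpCost_compProd_snd hp0 hT, lpCost_compProd_barycenter hp0 hT, hRcost, two_mul]

variable [Nonempty B]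

theorem memPp_barycenter (hp : 1 ≤ p) [IsProbabilityMeasure μ]
    (hμ : ∃ z₀, lpCost p μ (liftedEDist p dA z₀) ≠ ∞) : MemPp p edist (barycenter μ) := by
  have hp0 : 0 < p := by positivity
  obtain ⟨z₀, hz₀⟩ := hμ
  obtain ⟨x₀, -⟩ := z₀.2.2.2
  have hW : Measurable fun x : A × WassersteinSpace p B => Wp p edist z₀.2.1 x.2.1 :=
    measurable_Wp hp measurable_const measurable_snd fun _ => z₀.2.2.1
  refine (memPp_iff hp x₀).2 ⟨inferInstance, ne_top_of_le_ne_top (ENNReal.add_ne_top.2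
    ⟨hz₀, z₀.2.2.lpCost_edist_ne_top hp x₀⟩) ?_⟩
  calc lpCost p (barycenter μ) (edist x₀)
      = lpCost p μ fun x => lpCost p x.2.1 (edist x₀) :=
        lpCost_bind hp0 measurable_edist_right
          (measurable_subtype_coe.comp measurable_snd).aemeasurable
    _ ≤ lpCost p μ fun x => Wp p edist z₀.2.1 x.2.1 + lpCost p z₀.2.1 (edist x₀) :=
        lpCost_mono hp0 fun x => by
          rw [Wp_comm isMeasurableEDist_edist, add_comm]
          exact lpCost_edist_le_add_Wp hp x₀ x.2.1 z₀.2.1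
    _ ≤ lpCost p μ (fun x => Wp p edist z₀.2.1 x.2.1) + lpCost p z₀.2.1 (edist x₀) :=
        lpCost_add_const_le hp hW.aemeasurable _
    _ ≤ lpCost p μ (liftedEDist p dA z₀) + lpCost p z₀.2.1 (edist x₀) := by
        gcongr
        exact lpCost_mono hp0 fun x => le_lpAdd_right hp0 _ _

theorem eventually_dispersion_le (hp : 1 ≤ p) (hdA : IsMeasurableEDist dA)
    [IsProbabilityMeasure μ] (hμ : MemPp p edist (barycenter μ)) {ε : ℝ≥0∞} (hε : ε ≠ 0) :
    ∀ᶠ δ in 𝓝 0, ∀ (ν : Measure (A × WassersteinSpace p B))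
      (κ : Kernel (A × WassersteinSpace p B) (A × WassersteinSpace p B)),
      IsProbabilityMeasure ν → IsMarkovKernel κ → IsBicausalWitness p dA μ ν κ δ →
      dispersion ν κ ≤ ε := by
  have hp0 : 0 < p := by positivity
  have hε3 : 0 < ε / 3 := ENNReal.div_pos hε (by simp)
  obtain ⟨n, hn⟩ := ((tendsto_lpCost_nearestPoint hp hμ Classical.ofNonempty).eventually_le_const
    hε3).exists
  set T : SimpleFunc B B := nearestPoint Classical.ofNonempty n
  obtain ⟨D, hD, hTD⟩ := exists_edist_simpleFunc_le T
  obtain ⟨η, hη, hηε⟩ : ∃ η > 0, (D ^ p * T.range.card * η) ^ (1 / p) ≤ ε / 3 :=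
    (tendsto_mul_rpow_nhds_zero (ENNReal.mul_ne_top (ENNReal.rpow_ne_top_of_nonneg hp0.le hD)
      (ENNReal.natCast_ne_top _)) (one_div_pos.2 hp0)).eventually_le_const hε3
      |>.exists_gt
  filter_upwards [(Finset.eventually_all T.range).2 fun b _ =>
    eventually_lintegral_sub_apply_le hp hdA μ (T.measurableSet_fiber b) hη.ne'] with δ hδ ν κ _ _ h
  have hsum : ∑ b ∈ T.range, ∫⁻ z, (z.2.2.1 (T ⁻¹' {b}) - barycenter (κ z.1) (T ⁻¹' {b})) ∂(ν ⊗ₘ κ)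
      ≤ T.range.card * η := by
    simpa using Finset.sum_le_card_nsmul _ _ _ fun b hb => hδ b hb ν κ ‹_› ‹_› h
  calc dispersion ν κ ≤ 2 * (ε / 3) + (D ^ p * (T.range.card * η)) ^ (1 / p) := by
        refine (dispersion_le hp T hTD).trans ?_
        rw [h.comp_eq]
        gcongr
    _ ≤ 2 * (ε / 3) + ε / 3 := by
        rw [← mul_assoc]
        gcongr
    _ = ε := by rw [two_mul, ENNReal.add_thirds]

theorem Wp_liftedEDist_le_add_dispersion (hp : 1 ≤ p) (hdA : IsMeasurableEDist dA)
    [SFinite ν] [IsMarkovKernel κ] :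
    Wp p (liftedEDist p dA) (κ ∘ₘ ν) ν ≤
      lpCost p ν (fun y => causalCost p dA (κ y) y) + dispersion ν κ := by
  have hp0 : 0 < p := by positivity
  have hd := (isMeasurableEDist_liftedEDist (B := B) hp hdA).measurable
  let c : (A × WassersteinSpace p B) × (A × WassersteinSpace p B) → ℝ≥0∞ := fun z =>
    lpAdd p (dA z.2.1 z.1.1) (Wp p edist (barycenter (κ z.1)) z.1.2.1)
  let s : (A × WassersteinSpace p B) × (A × WassersteinSpace p B) → ℝ≥0∞ := fun z =>
    Wp p edist z.2.2.1 (barycenter (κ z.1))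
  have hbar : Measurable fun z : (A × WassersteinSpace p B) × (A × WassersteinSpace p B) =>
      barycenter (κ z.1) := measurable_barycenter.comp (κ.measurable.comp measurable_fst)
  have hc : Measurable c :=
    measurable_lpAdd (hdA.measurable_comp (by fun_prop) (by fun_prop))
      (measurable_Wp hp hbar (measurable_snd.comp measurable_fst) fun _ => inferInstance)
  have hs : Measurable s := by
    simp only [s, Wp_comm isMeasurableEDist_edist _ (barycenter _)]
    exact measurable_Wp hp hbar (measurable_snd.comp measurable_snd) fun _ => inferInstance
  have hcost : lpCost p (ν ⊗ₘ κ) c = lpCost p ν fun y => causalCost p dA (κ y) y := by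
    rw [lpCost_compProd hp0 hc]
    refine congrArg _ (funext fun y => ?_)
    have hdy : Measurable fun x : A × WassersteinSpace p B => dA x.1 y.1 :=
      hdA.measurable_comp measurable_fst measurable_const
    exact (lpCost_lpAdd hp0 hdy).trans
      (congrArg _ (lpCost_const hp0 (Wp p edist (barycenter (κ y)) y.2.1)))
  have hpoint : ∀ z : (A × WassersteinSpace p B) × (A × WassersteinSpace p B),
      liftedEDist p dA z.2 z.1 ≤ c z + s z := fun z =>
    (lpAdd_mono hp0 le_rfl ((Wp_triangle hp isMeasurableEDist_edist).trans_eq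
      (add_comm _ _))).trans (lpAdd_add_right_le hp ..)
  calc Wp p (liftedEDist p dA) (κ ∘ₘ ν) ν
      ≤ lpCost p ((ν ⊗ₘ κ).map Prod.swap) fun z => liftedEDist p dA z.1 z.2 :=
        Wp_le_lpCost (map_swap_compProd_mem_Cpl_iff.2 rfl)
    _ = lpCost p (ν ⊗ₘ κ) fun z => liftedEDist p dA z.2 z.1 := lpCost_map hd measurable_swap
    _ ≤ lpCost p (ν ⊗ₘ κ) c + lpCost p (ν ⊗ₘ κ) s :=
        (lpCost_mono hp0 hpoint).trans
          (lpCost_add_le hp hc.aemeasurable hs.aemeasurable)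
    _ = _ := by rw [hcost]; rfl

theorem exists_Wp_liftedEDist_lt (hp : 1 ≤ p) (hdA : IsMeasurableEDist dA)
    [IsProbabilityMeasure μ] (hμ : MemPp p edist (barycenter μ)) {ε : ℝ≥0∞} (hε : 0 < ε) :
    ∃ δ > 0, ∀ (ν : Measure (A × WassersteinSpace p B)) [IsProbabilityMeasure ν],
      causalWp p dA μ ν < δ → causalWp p dA ν μ < δ → Wp p (liftedEDist p dA) μ ν < ε := by
  obtain ⟨ε', hε', hlt⟩ := exists_between hε
  have hhalf : 0 < ε' / 2 := ENNReal.half_pos hε'.ne'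
  obtain ⟨δ, hδ, hdisp, hle⟩ := ((eventually_dispersion_le hp hdA hμ hhalf.ne').and
    (eventually_le_nhds hhalf)).exists_gt
  refine ⟨δ, hδ, fun ν _ hcausal hanti => lt_of_le_of_lt ?_ hlt⟩
  obtain ⟨κ, hκ, rfl, hcost⟩ := causalWp_lt_iff.1 hcausal
  calc Wp p (liftedEDist p dA) (κ ∘ₘ ν) ν
      ≤ lpCost p ν (fun y => causalCost p dA (κ y) y) + dispersion ν κ :=
        Wp_liftedEDist_le_add_dispersion hp hdA
    _ ≤ ε' / 2 + ε' / 2 :=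
        add_le_add (hcost.le.trans hle) (hdisp ν κ inferInstance hκ ⟨rfl, hcost, hanti⟩)
    _ = ε' := ENNReal.add_halves ε'

end Dispersion

section BallTopology

variable {α : Type*}

theorem ballTop_le_ballTop {d e : α → α → ℝ≥0∞} (he : ∀ x, e x x = 0)
    (h : ∀ x y r, d x y < r → ∃ δ > 0, ∀ z, e y z < δ → d x z < r) : ballTop e ≤ ballTop d := by
  refine le_generateFrom ?_
  rintro s ⟨x, r, -, rfl⟩
  let _ := ballTop e
  refine isOpen_iff_forall_mem_open.2 fun y hy => ?_
  obtain ⟨δ, hδ, hball⟩ := h x y r hy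
  exact ⟨{z | e y z < δ}, hball, TopologicalSpace.isOpen_generateFrom_of_mem ⟨y, δ, hδ, rfl⟩,
    (he y).trans_lt hδ⟩

theorem exists_pos_forall_lt_add_lt {a r : ℝ≥0∞} (h : a < r) :
    ∃ ε > 0, ∀ b < ε, a + b < r :=
  ⟨r - a, tsub_pos_of_lt h, fun b hb => add_comm b a ▸ lt_tsub_iff_right.1 hb⟩

theorem ballTop_max_eq_ballTop {c w : α → α → ℝ≥0∞} (hself : ∀ x, w x x = 0)
    (hcomm : ∀ x y, w x y = w y x) (htri : ∀ x y z, w x z ≤ w x y + w y z)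
    (hctri : ∀ x y z, c x z ≤ c x y + c y z) (hcw : ∀ x y, c x y ≤ w x y)
    (hwc : ∀ x, ∀ ε > 0, ∃ δ > 0, ∀ z, c x z < δ → c z x < δ → w x z < ε) :
    ballTop (fun x y => max (c x y) (c y x)) = ballTop w := by
  have hmaxw : ∀ x y, max (c x y) (c y x) ≤ w x y := fun x y =>
    max_le (hcw x y) ((hcw y x).trans_eq (hcomm y x))
  have hmaxtri : ∀ x y z, max (c x z) (c z x) ≤ max (c x y) (c y x) + w y z := fun x y z =>
    max_le ((hctri x y z).trans (add_le_add (le_max_left ..) (hcw y z)))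
      ((hctri z y x).trans ((add_comm ..).trans_le
        (add_le_add (le_max_right ..) ((hcw z y).trans_eq (hcomm z y)))))
  refine le_antisymm (ballTop_le_ballTop (fun x => ?_) fun x y r h => ?_)
    (ballTop_le_ballTop hself fun x y r h => ?_)
  · exact le_antisymm ((hmaxw x x).trans_eq (hself x)) zero_le
  · obtain ⟨ε, hε, hlt⟩ := exists_pos_forall_lt_add_lt h
    obtain ⟨δ, hδ, hw⟩ := hwc y ε hε
    exact ⟨δ, hδ, fun z hz => (htri x y z).trans_lt
      (hlt _ (hw z (max_lt_iff.1 hz).1 (max_lt_iff.1 hz).2))⟩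
  · obtain ⟨ε, hε, hlt⟩ := exists_pos_forall_lt_add_lt h
    exact ⟨ε, hε, fun z hz => (hmaxtri x y z).trans_lt (hlt _ hz)⟩

end BallTopology

theorem SCWbar_AWbar_same_topology_general {A B : Type*} [MeasurableSpace A] [StandardBorelSpace A]
    [PseudoMetricSpace B] [MeasurableSpace B] [BorelSpace B] [SecondCountableTopology B]
    [StandardBorelSpace B] [Nonempty B] {dA : A → A → ℝ≥0∞} (hdA : IsMeasurableEDist dA) {p : ℝ}
    (hp : 1 ≤ p) :
    let PL := {μ : Measure (A × Measure B) // MemPpLift p dA edist μ}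
    ballTop (fun μ ν : PL => SCWbar p dA edist μ.1 ν.1) =
      ballTop (fun μ ν : PL => AWbar p dA edist μ.1 ν.1) := by
  intro PL
  have := Fact.mk hp
  have hd := isMeasurableEDist_liftedEDist (B := B) hp hdA
  choose lift hprob hmoment hlift using fun μ : PL => exists_map_liftIncl_eq hp μ.2
  have hAW : ∀ μ ν : PL, AWbar p dA edist μ.1 ν.1 = Wp p (liftedEDist p dA) (lift μ) (lift ν) :=
    fun μ ν => by rw [← AWbar_map_liftIncl hp, hlift, hlift]
  have hCW : ∀ μ ν : PL, CWbar p dA edist μ.1 ν.1 = causalWp p dA (lift μ) (lift ν) :=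
    fun μ ν => by rw [← CWbar_map_liftIncl hp hdA, hlift, hlift]
  simp only [SCWbar, hAW, hCW]
  refine ballTop_max_eq_ballTop (fun μ => Wp_self (by positivity) hd _) (fun μ ν => Wp_comm hd _ _)
    (fun μ ν ρ => Wp_triangle hp hd) (fun μ ν ρ => causalWp_triangle hp hdA)
    (fun μ ν => causalWp_le_Wp hp hdA) fun μ ε hε => ?_
  obtain ⟨δ, hδ, h⟩ := exists_Wp_liftedEDist_lt hp hdA (memPp_barycenter hp (hmoment μ)) hε
  exact ⟨δ, hδ, fun ν => h (lift ν)⟩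

/-- **Theorem 4.16.**  The topology induced by `SCW̄_p` on `𝒫_p(𝒳₁ × 𝒫_p(𝒳₂))`
equals the topology induced by `AW̄_p`. -/
theorem SCWbar_AWbar_same_topology
    {X1 X2 : Type} [MetricSpace X1] [CompleteSpace X1] [SecondCountableTopology X1]
    [MeasurableSpace X1] [BorelSpace X1] [Nonempty X1]
    [MetricSpace X2] [CompleteSpace X2] [SecondCountableTopology X2]
    [MeasurableSpace X2] [BorelSpace X2] [Nonempty X2]
    (p : ℝ) (hp : 1 ≤ p) :
    let dA : X1 → X1 → ℝ≥0∞ := edist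
    let dB : X2 → X2 → ℝ≥0∞ := edist
    let PL := {μ : Measure (X1 × Measure X2) // MemPpLift p dA dB μ}
    ballTop (fun μ ν : PL => SCWbar p dA dB μ.1 ν.1) =
      ballTop (fun μ ν : PL => AWbar p dA dB μ.1 ν.1) :=
  SCWbar_AWbar_same_topology_general isMeasurableEDist_edist hp

end AWPaper
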